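/- Let f ∈ BV(ℝ) and let (f_j) ⊂ BV(ℝ) with ‖f_j − f‖_{BV} → 0. Let E = {x : M̃f(x) > |f|‾(x)}. Then ∫_E |(M̃f_j)' − (M̃f)'| → 0 as j → ∞. -/

import Mathlib

open MeasureTheory Filter Set Topology

/-- Average of |f| over the interval (a,b). -/
noncomputable def mAvg (f : ℝ → ℝ) (a b : ℝ) : ℝ := (∫ t in a..b, |f t|) / (b - a)

/-- Uncentered Hardy–Littlewood maximal function. -/
noncomputable def uMax (f : ℝ → ℝ) (x : ℝ) : ℝ :=
  sSup {y | ∃ a b : ℝ, a < b ∧ a ≤ x ∧ x ≤ b ∧ y = mAvg f a b}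

/-- f has bounded variation on ℝ. -/
def BVfun (f : ℝ → ℝ) : Prop := BoundedVariationOn f Set.univ

/-- Total variation of f over a set, as a real number. -/
noncomputable def varOn (f : ℝ → ℝ) (s : Set ℝ) : ℝ := (eVariationOn f s).toReal

/-- BV norm: |f(-∞)| + Var(f). -/
noncomputable def bvNorm (f : ℝ → ℝ) : ℝ :=
  |limUnder Filter.atBot f| + varOn f Set.univ

/-- Upper precise representative: limsup over intervals I ∋ x with |I| → 0 of averages of |f|. -/
noncomputable def ubar (f : ℝ → ℝ) (x : ℝ) : ℝ :=
  ⨅ h : {h : ℝ // 0 < h},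
    sSup {y | ∃ a b : ℝ, a < b ∧ a ≤ x ∧ x ≤ b ∧ b - a ≤ h.1 ∧ y = mAvg f a b}

/-- The open "interval" (a,b) in ℝ with extended-real endpoints. -/
noncomputable def erealIoo (a b : EReal) : Set ℝ := {x : ℝ | a < (x : EReal) ∧ (x : EReal) < b}

/-- Value of g at an extended-real point, understood as a limit at ±∞. -/
noncomputable def valAt (g : ℝ → ℝ) (a : EReal) : ℝ :=
  if a = ⊥ then limUnder Filter.atBot g
  else if a = ⊤ then limUnder Filter.atTop g
  else g a.toReal

theorem BoundedVariationOn.exists_abs_le {f : ℝ → ℝ} (hf : BoundedVariationOn f univ) :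
    ∃ B : ℝ, 0 ≤ B ∧ ∀ x, |f x| ≤ B := by
  refine ⟨|f 0| + (eVariationOn f univ).toReal, by positivity, fun x => ?_⟩
  have h := hf.dist_le (mem_univ x) (mem_univ 0)
  rw [Real.dist_eq] at h
  have := abs_sub_abs_le_abs_sub (f x) (f 0)
  linarith

theorem BoundedVariationOn.intervalIntegrable_abs {f : ℝ → ℝ} (hf : BoundedVariationOn f univ)
    (a b : ℝ) : IntervalIntegrable (fun t => |f t|) volume a b := by
  obtain ⟨p, q, hp, hq, h⟩ := hf.locallyBoundedVariationOn.exists_monotoneOn_sub_monotoneOn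
  have : IntervalIntegrable (p - q) volume a b :=
    ((hp.mono (subset_univ _)).intervalIntegrable).sub ((hq.mono (subset_univ _)).intervalIntegrable)
  rw [← h] at this
  exact this.abs

theorem mAvg_le_of_forall_le {f : ℝ → ℝ} (hf : BoundedVariationOn f univ) {a b c : ℝ} (hab : a < b)
    (h : ∀ t ∈ Ioo a b, |f t| ≤ c) : mAvg f a b ≤ c := by
  rw [mAvg, div_le_iff₀ (sub_pos.2 hab)]
  have := intervalIntegral.integral_mono_on_of_le_Ioo hab.le (hf.intervalIntegrable_abs a b)
    (intervalIntegrable_const (c := c)) h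
  simpa [mul_comm] using this

theorem le_mAvg_of_forall_le {f : ℝ → ℝ} (hf : BoundedVariationOn f univ) {a b c : ℝ} (hab : a < b)
    (h : ∀ t ∈ Ioo a b, c ≤ |f t|) : c ≤ mAvg f a b := by
  rw [mAvg, le_div_iff₀ (sub_pos.2 hab)]
  have := intervalIntegral.integral_mono_on_of_le_Ioo hab.le
    (intervalIntegrable_const (c := c)) (hf.intervalIntegrable_abs a b) h
  simpa [mul_comm] using this

theorem exists_mAvg_le_abs {f : ℝ → ℝ} (hf : BoundedVariationOn f univ) {a b c : ℝ} (hab : a < b)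
    (h : c < mAvg f a b) : ∃ t ∈ Ioo a b, c < |f t| := by
  by_contra! H
  exact absurd (mAvg_le_of_forall_le hf hab H) (not_le.2 h)

theorem mAvg_mul_sub {f : ℝ → ℝ} {a b : ℝ} (hab : a < b) :
    mAvg f a b * (b - a) = ∫ t in a..b, |f t| := by
  rw [mAvg, div_mul_cancel₀ _ (sub_pos.2 hab).ne']

theorem mAvg_le_mAvg_add {f g : ℝ → ℝ} (hf : BoundedVariationOn f univ)
    (hg : BoundedVariationOn g univ) {a b e : ℝ} (hab : a < b) (h : ∀ t, |f t - g t| ≤ e) :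
    mAvg f a b ≤ mAvg g a b + e := by
  have h1 := intervalIntegral.integral_mono_on hab.le (hf.intervalIntegrable_abs a b)
    ((hg.intervalIntegrable_abs a b).add (intervalIntegrable_const (c := e)))
    (fun t _ => by have := abs_sub_abs_le_abs_sub (f t) (g t); have := h t; linarith)
  rw [intervalIntegral.integral_add (hg.intervalIntegrable_abs a b) intervalIntegrable_const,
    intervalIntegral.integral_const, ← mAvg_mul_sub hab, ← mAvg_mul_sub hab, smul_eq_mul,
    mul_comm (b - a) e, ← add_mul] at h1
  exact le_of_mul_le_mul_right h1 (sub_pos.2 hab)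

theorem mAvg_le_uMax {f : ℝ → ℝ} (hf : BoundedVariationOn f univ) {a b x : ℝ} (hab : a < b)
    (ha : a ≤ x) (hb : x ≤ b) : mAvg f a b ≤ uMax f x := by
  obtain ⟨B, -, hB⟩ := hf.exists_abs_le
  refine le_csSup ⟨B, ?_⟩ ⟨a, b, hab, ha, hb, rfl⟩
  rintro _ ⟨a, b, hab, -, -, rfl⟩
  exact mAvg_le_of_forall_le hf hab fun t _ => hB t

theorem exists_lt_mAvg {f : ℝ → ℝ} {x c : ℝ} (h : c < uMax f x) :
    ∃ a b : ℝ, a < b ∧ a ≤ x ∧ x ≤ b ∧ c < mAvg f a b := by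
  obtain ⟨_, ⟨a, b, hab, ha, hb, rfl⟩, hc⟩ := exists_lt_of_lt_csSup
    (by exact ⟨_, x - 1, x + 1, by linarith, by linarith, by linarith, rfl⟩) h
  exact ⟨a, b, hab, ha, hb, hc⟩

theorem uMax_le_of_forall_le {f : ℝ → ℝ} {x c : ℝ}
    (h : ∀ a b : ℝ, a < b → a ≤ x → x ≤ b → mAvg f a b ≤ c) : uMax f x ≤ c := by
  by_contra! H
  obtain ⟨a, b, hab, ha, hb, hc⟩ := exists_lt_mAvg H
  exact absurd (h a b hab ha hb) (not_le.2 hc)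

theorem mAvg_nonneg (f : ℝ → ℝ) {a b : ℝ} (hab : a < b) : 0 ≤ mAvg f a b :=
  div_nonneg (intervalIntegral.integral_nonneg hab.le fun _ _ => abs_nonneg _) (sub_pos.2 hab).le

theorem uMax_nonneg {f : ℝ → ℝ} (hf : BoundedVariationOn f univ) (x : ℝ) : 0 ≤ uMax f x :=
  (mAvg_nonneg f (show x < x + 1 by linarith)).trans
    (mAvg_le_uMax hf (by linarith) le_rfl (by linarith))

theorem uMax_le_uMax_add {f g : ℝ → ℝ} (hf : BoundedVariationOn f univ)
    (hg : BoundedVariationOn g univ) {e : ℝ} (h : ∀ t, |f t - g t| ≤ e) (x : ℝ) :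
    uMax f x ≤ uMax g x + e :=
  uMax_le_of_forall_le fun a b hab ha hb =>
    (mAvg_le_mAvg_add hf hg hab h).trans (by linarith [mAvg_le_uMax hg hab ha hb])

theorem mAvg_split {f : ℝ → ℝ} (hf : BoundedVariationOn f univ) (a b c : ℝ) :
    (∫ t in a..b, |f t|) + (∫ t in b..c, |f t|) = ∫ t in a..c, |f t| :=
  intervalIntegral.integral_add_adjacent_intervals (hf.intervalIntegrable_abs a b)
    (hf.intervalIntegrable_abs b c)

/-- An almost optimal interval may be taken to have `x` as an endpoint. -/
theorem exists_lt_mAvg_endpoint {f : ℝ → ℝ} (hf : BoundedVariationOn f univ) {x c : ℝ}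
    (h : c < uMax f x) :
    (∃ b, x < b ∧ c < mAvg f x b) ∨ (∃ a, a < x ∧ c < mAvg f a x) := by
  obtain ⟨a, b, hab, ha, hb, hc⟩ := exists_lt_mAvg h
  rcases ha.eq_or_lt with rfl | ha
  · exact Or.inl ⟨b, hab, hc⟩
  rcases hb.eq_or_lt with rfl | hb
  · exact Or.inr ⟨a, hab, hc⟩
  by_contra! H
  have h1 := H.1 b hb
  have h2 := H.2 a ha
  have e := mAvg_split hf a x b
  rw [← mAvg_mul_sub ha, ← mAvg_mul_sub hb, ← mAvg_mul_sub hab] at e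
  nlinarith [mul_le_mul_of_nonneg_right h1 (sub_pos.2 hb).le,
    mul_le_mul_of_nonneg_right h2 (sub_pos.2 ha).le, mul_lt_mul_of_pos_right hc (sub_pos.2 hab)]

theorem le_uMax_of_tendsto_right {f : ℝ → ℝ} (hf : BoundedVariationOn f univ) {x l : ℝ}
    (h : Tendsto f (𝓝[>] x) (𝓝 l)) {d : ℝ} (hd : 0 < d) {c : ℝ} (hc : c < |l|) :
    ∃ b, x < b ∧ b - x ≤ d ∧ c ≤ mAvg f x b := by
  have h1 : ∀ᶠ t in 𝓝[>] x, c < |f t| := h.abs.eventually_const_lt hc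
  obtain ⟨b, hb, hs⟩ := (mem_nhdsGT_iff_exists_Ioo_subset).1 h1
  have hb : x < b := hb
  refine ⟨min b (x + d), lt_min hb (by linarith), by linarith [min_le_right b (x + d)], ?_⟩
  refine le_mAvg_of_forall_le hf (lt_min hb (by linarith)) fun t ht => ?_
  exact le_of_lt (hs ⟨ht.1, ht.2.trans_le (min_le_left _ _)⟩)

theorem le_uMax_of_tendsto_left {f : ℝ → ℝ} (hf : BoundedVariationOn f univ) {x l : ℝ}
    (h : Tendsto f (𝓝[<] x) (𝓝 l)) : |l| ≤ uMax f x := by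
  refine le_of_forall_lt fun c hc => ?_
  obtain ⟨c', hcc, hc⟩ := exists_between hc
  have h1 : ∀ᶠ t in 𝓝[<] x, c' < |f t| := h.abs.eventually_const_lt hc
  obtain ⟨b, hb, hs⟩ := (mem_nhdsLT_iff_exists_Ioo_subset).1 h1
  have hb : b < x := hb
  exact hcc.trans_le ((le_mAvg_of_forall_le hf hb fun t ht => le_of_lt (hs ht)).trans
    (mAvg_le_uMax hf hb hb.le le_rfl))

theorem abs_le_uMax_of_tendsto_right {f : ℝ → ℝ} (hf : BoundedVariationOn f univ) {x l : ℝ}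
    (h : Tendsto f (𝓝[>] x) (𝓝 l)) : |l| ≤ uMax f x := by
  refine le_of_forall_lt_imp_le_of_dense fun c hc => ?_
  obtain ⟨b, hb, -, hc⟩ := le_uMax_of_tendsto_right hf h one_pos hc
  exact hc.trans (mAvg_le_uMax hf hb le_rfl hb.le)

theorem mAvg_mul_sub_mono {f : ℝ → ℝ} (hf : BoundedVariationOn f univ) {a b a' b' : ℝ}
    (hab : a < b) (ha : a' ≤ a) (hb : b ≤ b') :
    mAvg f a b * (b - a) ≤ mAvg f a' b' * (b' - a') := by
  rw [mAvg_mul_sub hab, mAvg_mul_sub (by linarith)]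
  exact intervalIntegral.integral_mono_interval ha hab.le hb
    (Eventually.of_forall fun _ => abs_nonneg _) (hf.intervalIntegrable_abs _ _)

theorem continuous_uMax {f : ℝ → ℝ} (hf : BoundedVariationOn f univ) : Continuous (uMax f) := by
  rw [continuous_iff_continuousAt]
  intro x
  refine tendsto_order.2 ⟨fun c hc => ?_, fun c hc => ?_⟩
  · obtain ⟨a, b, hab, ha, hb, hm⟩ := exists_lt_mAvg hc
    have hd : 0 < (mAvg f a b - c) * (b - a) / (|c| + 1) := by
      have := sub_pos.2 hm; have := sub_pos.2 hab; positivity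
    filter_upwards [Metric.ball_mem_nhds x hd] with y hy
    rw [Metric.mem_ball, Real.dist_eq, lt_div_iff₀ (by positivity)] at hy
    set a' := min a y with ha'
    set b' := max b y with hb'
    have h1 : a' ≤ a := min_le_left _ _
    have h2 : b ≤ b' := le_max_left _ _
    have h3 := mAvg_mul_sub_mono hf hab h1 h2
    have h4 : b' - a' ≤ (b - a) + |y - x| := by
      have := neg_abs_le (y - x); have := le_abs_self (y - x)
      rcases min_cases a y with h | h <;> rcases max_cases b y with h' | h' <;> linarith
    have h5 : mAvg f a' b' ≤ uMax f y :=
      mAvg_le_uMax hf (by linarith) (min_le_right _ _) (le_max_right _ _)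
    have h6 : c * (b' - a') < mAvg f a b * (b - a) := by
      have : c * (b' - a') = c * (b - a) + c * ((b' - a') - (b - a)) := by ring
      have h7 : c * ((b' - a') - (b - a)) ≤ |c| * |y - x| :=
        (mul_le_mul_of_nonneg_right (le_abs_self c) (by linarith)).trans
          (mul_le_mul_of_nonneg_left (by linarith) (abs_nonneg c))
      nlinarith [abs_nonneg (y - x)]
    exact (lt_of_mul_lt_mul_right (h6.trans_le h3) (by linarith)).trans_le h5
  · obtain ⟨c', hc', hcc⟩ := exists_between hc
    have hr := abs_le_uMax_of_tendsto_right hf (hf.tendsto_rightLim x)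
    have hl := le_uMax_of_tendsto_left hf (hf.tendsto_leftLim x)
    obtain ⟨p, hp, hp'⟩ := (mem_nhdsGT_iff_exists_Ioo_subset).1
      ((hf.tendsto_rightLim x).abs.eventually_lt_const (hr.trans_lt hc'))
    obtain ⟨q, hq, hq'⟩ := (mem_nhdsLT_iff_exists_Ioo_subset).1
      ((hf.tendsto_leftLim x).abs.eventually_lt_const (hl.trans_lt hc'))
    have hp : x < p := hp
    have hq : q < x := hq
    set r := min (p - x) (x - q) with hr
    have hr0 : 0 < r := lt_min (by linarith) (by linarith)
    have hrp : r ≤ p - x := min_le_left _ _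
    have hrq : r ≤ x - q := min_le_right _ _
    have hu := uMax_nonneg hf x
    have hd : 0 < min (r / 2) ((c' - uMax f x) * (r / 2) / (uMax f x + 1)) := by
      have := sub_pos.2 hc'; positivity
    filter_upwards [Metric.ball_mem_nhds x hd] with y hy
    rw [Metric.mem_ball, Real.dist_eq, lt_min_iff] at hy
    have hy2 := (lt_div_iff₀ (by positivity)).1 hy.2
    refine lt_of_le_of_lt (uMax_le_of_forall_le fun a b hab ha hb => ?_) hcc
    have key : ∀ d, 0 ≤ d → d ≤ |y - x| → r / 2 ≤ b - a →
        mAvg f a b * (b - a) ≤ uMax f x * (b - a + d) → mAvg f a b ≤ c' := by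
      intro d hd hdy hba hm
      have h1 : uMax f x * d ≤ (c' - uMax f x) * (b - a) := by
        nlinarith [mul_le_mul_of_nonneg_left hdy hu, mul_le_mul_of_nonneg_left hba (sub_pos.2 hc').le,
          abs_nonneg (y - x)]
      exact le_of_mul_le_mul_right (by linarith) (sub_pos.2 hab)
    rcases le_or_gt a x with hax | hax
    · rcases le_or_gt x b with hxb | hxb
      · exact (mAvg_le_uMax hf hab hax hxb).trans hc'.le
      · rcases lt_or_ge (x - r) a with h | h
        · exact mAvg_le_of_forall_le hf hab fun t ht =>
            le_of_lt (hq' ⟨by linarith [ht.1], by linarith [ht.2]⟩)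
        · have h1 := neg_abs_le (y - x)
          refine key (x - b) (by linarith) (by linarith) (by linarith [hy.1]) ?_
          refine (mAvg_mul_sub_mono hf hab le_rfl hxb.le).trans ?_
          rw [show b - a + (x - b) = x - a by ring]
          exact mul_le_mul_of_nonneg_right (mAvg_le_uMax hf (by linarith) hax le_rfl) (by linarith)
    · rcases lt_or_ge b (x + r) with h | h
      · exact mAvg_le_of_forall_le hf hab fun t ht =>
          le_of_lt (hp' ⟨by linarith [ht.1], by linarith [ht.2]⟩)
      · have h1 := le_abs_self (y - x)
        refine key (a - x) (by linarith) (by linarith) (by linarith [hy.1]) ?_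
        refine (mAvg_mul_sub_mono hf hab hax.le le_rfl).trans ?_
        rw [show b - a + (a - x) = b - x by ring]
        exact mul_le_mul_of_nonneg_right (mAvg_le_uMax hf (by linarith) le_rfl (by linarith))
          (by linarith)

/-- A local maximum value of the maximal function is nearly attained by the function itself. -/
theorem exists_abs_gt_of_uMax_peak {f : ℝ → ℝ} (hf : BoundedVariationOn f univ) {x y z c : ℝ}
    (hxy : x < y) (hyz : y < z) (h1 : uMax f x < uMax f y) (h2 : uMax f z < uMax f y)
    (hc : c < uMax f y) : ∃ q ∈ Ioo x z, c < |f q| := by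
  obtain ⟨a, b, hab, ha, hb, hm⟩ := exists_lt_mAvg (max_lt (max_lt h1 h2) hc)
  simp only [max_lt_iff] at hm
  have hxa : x < a := by
    by_contra! h
    linarith [mAvg_le_uMax hf hab h (by linarith)]
  have hbz : b < z := by
    by_contra! h
    linarith [mAvg_le_uMax hf hab (by linarith) h]
  obtain ⟨q, hq, hcq⟩ := exists_mAvg_le_abs hf hab hm.2
  exact ⟨q, ⟨by linarith [hq.1], by linarith [hq.2]⟩, hcq⟩

theorem eVariationOn_le_of_forall_sum_le {u : ℝ → ℝ} {s : Set ℝ} {C : ENNReal}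
    (h : ∀ (n : ℕ) (p : ℕ → ℝ), Monotone p → (∀ i, p i ∈ s) →
      ENNReal.ofReal (∑ i ∈ Finset.range n, |u (p (i + 1)) - u (p i)|) ≤ C) :
    eVariationOn u s ≤ C := by
  refine iSup_le fun ⟨n, p, hp, hps⟩ => ?_
  refine le_trans (le_of_eq ?_) (h n p hp hps)
  rw [ENNReal.ofReal_sum_of_nonneg fun _ _ => abs_nonneg _]
  simp [edist_dist, Real.dist_eq]

theorem variationOnFromTo_le_eVariationOn {w : ℝ → ℝ} {a b : ℝ} (hab : a ≤ b)
    (hw : BoundedVariationOn w univ) :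
    variationOnFromTo w univ a b ≤ (eVariationOn w univ).toReal := by
  rw [variationOnFromTo.eq_of_le _ _ hab]
  exact ENNReal.toReal_mono hw (eVariationOn.mono _ (subset_univ _))

/-- If `w ≤ u ≤ w + d` and peaks of `u` are nearly attained by `w`, the variation of `u`
is controlled by that of `w`. -/
theorem eVariationOn_le_of_peaks {u w : ℝ → ℝ} {d : ℝ} (hw : BoundedVariationOn w univ)
    (hwu : ∀ x, w x ≤ u x) (hd : ∀ x, u x ≤ w x + d)
    (hpeak : ∀ x y z c, x < y → y < z → u x < u y → u z < u y → c < u y → ∃ q ∈ Ioo x z, c < w q) :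
    eVariationOn u univ ≤ eVariationOn w univ + ENNReal.ofReal (2 * d) := by
  have hwl := hw.locallyBoundedVariationOn
  set V : ℝ → ℝ → ℝ := variationOnFromTo w univ with hV
  have hadd : ∀ a b c, V a b + V b c = V a c := fun a b c =>
    variationOnFromTo.add hwl (mem_univ _) (mem_univ _) (mem_univ _)
  have hle : ∀ a b, a ≤ b → |w b - w a| ≤ V a b := fun a b hab => by
    have := variationOnFromTo.abs_sub_le_sub_of_le hwl (mem_univ a) (mem_univ a) (mem_univ b) hab
    rwa [variationOnFromTo.self, sub_zero] at this
  refine eVariationOn_le_of_forall_sum_le fun n p hp _ => ?_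
  have main : ∀ n, ∀ y, p n ≤ y →
      (∑ i ∈ Finset.range n, |u (p (i + 1)) - u (p i)|) + |u y - u (p n)| ≤
        (u (p 0) - w (p 0)) + V (p 0) y + (u y - w y) := by
    intro n
    induction n with
    | zero =>
      intro y hy
      have h1 := hle _ _ hy
      have h2 := hwu y
      have h3 := hwu (p 0)
      simp only [Finset.range_zero, Finset.sum_empty, zero_add]
      have := le_abs_self (w y - w (p 0))
      have := neg_abs_le (w y - w (p 0))
      rcases abs_cases (u y - u (p 0)) with h | h <;> linarith
    | succ n ih =>
      intro y hy
      rw [Finset.sum_range_succ]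
      have hpn : p n ≤ p (n + 1) := hp n.le_succ
      have h1 := hle _ _ hy
      have := le_abs_self (w y - w (p (n + 1)))
      have := neg_abs_le (w y - w (p (n + 1)))
      have i1 := ih y (hpn.trans hy)
      have i2 := ih (p (n + 1)) hpn
      have i3 := ih (p n) le_rfl
      rw [sub_self, abs_zero] at i3
      have a1 := hadd (p 0) (p (n + 1)) y
      have a2 := hadd (p 0) (p n) y
      rcases le_or_gt (u (p (n + 1))) (u y) with hy1 | hy1
      · rw [abs_of_nonneg (sub_nonneg.2 hy1)]
        linarith
      rcases le_or_gt (u (p (n + 1))) (u (p n)) with hn1 | hn1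
      · rw [abs_of_nonpos (by linarith : u y - u (p n) ≤ 0)] at i1
        rw [abs_of_nonpos (by linarith : u y - u (p (n + 1)) ≤ 0),
          abs_of_nonpos (by linarith : u (p (n + 1)) - u (p n) ≤ 0)]
        linarith
      rw [abs_of_nonpos (by linarith : u y - u (p (n + 1)) ≤ 0),
          abs_of_nonneg (by linarith : 0 ≤ u (p (n + 1)) - u (p n))]
      refine le_of_forall_pos_le_add fun e he => ?_
      have l1 : p n < p (n + 1) := lt_of_le_of_ne hpn fun h => by rw [h] at hn1; exact lt_irrefl _ hn1
      have l2 : p (n + 1) < y := lt_of_le_of_ne hy fun h => by rw [h] at hy1; exact lt_irrefl _ hy1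
      obtain ⟨q, hq, hqw⟩ := hpeak _ _ _ (u (p (n + 1)) - e / 2) l1 l2 hn1 hy1 (by linarith)
      have b1 := hle _ _ hq.1.le
      have b2 := hle _ _ hq.2.le
      have a3 := hadd (p n) q y
      have := le_abs_self (w q - w (p n))
      have := neg_abs_le (w y - w q)
      have := hwu y
      linarith
  have hn := main n (p n) le_rfl
  rw [sub_self, abs_zero, add_zero] at hn
  have h1 : V (p 0) (p n) ≤ (eVariationOn w univ).toReal :=
    variationOnFromTo_le_eVariationOn (hp n.zero_le) hw
  calc ENNReal.ofReal (∑ i ∈ Finset.range n, |u (p (i + 1)) - u (p i)|)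
      ≤ ENNReal.ofReal ((eVariationOn w univ).toReal + 2 * d) :=
        ENNReal.ofReal_le_ofReal (by linarith [hd (p 0), hd (p n)])
    _ ≤ _ := by
      refine ENNReal.ofReal_add_le.trans ?_
      rw [ENNReal.ofReal_toReal hw]

theorem BoundedVariationOn.sum_abs_le {c : ℝ → ℝ} {s : Set ℝ} (hc : BoundedVariationOn c s)
    (n : ℕ) {p : ℕ → ℝ} (hp : Monotone p) (hps : ∀ i, p i ∈ s) :
    ∑ i ∈ Finset.range n, |c (p (i + 1)) - c (p i)| ≤ (eVariationOn c s).toReal := by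
  have h := eVariationOn.sum_le (f := c) (n := n) hp hps
  rw [← ENNReal.ofReal_le_iff_le_toReal hc, ENNReal.ofReal_sum_of_nonneg fun _ _ => abs_nonneg _]
  simpa [edist_dist, Real.dist_eq] using h

theorem sum_abs_le_sub_of_forall_abs_le {c S : ℝ → ℝ} (h : ∀ x y, x ≤ y → |c y - c x| ≤ S y - S x)
    (n : ℕ) {p : ℕ → ℝ} (hp : Monotone p) :
    ∑ i ∈ Finset.range n, |c (p (i + 1)) - c (p i)| ≤ S (p n) - S (p 0) := by
  rw [← Finset.sum_range_sub (fun i => S (p i))]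
  exact Finset.sum_le_sum fun i _ => h _ _ (hp i.le_succ)

theorem abs_sub_le_variationOnFromTo {h : ℝ → ℝ} (hh : BoundedVariationOn h univ) {x y : ℝ}
    (hxy : x ≤ y) :
    |h y - h x| ≤ variationOnFromTo h univ 0 y - variationOnFromTo h univ 0 x :=
  variationOnFromTo.abs_sub_le_sub_of_le hh.locallyBoundedVariationOn (mem_univ _) (mem_univ _)
    (mem_univ _) hxy

theorem variationOnFromTo_sub {h : ℝ → ℝ} (hh : BoundedVariationOn h univ) (x y : ℝ) :
    variationOnFromTo h univ 0 y - variationOnFromTo h univ 0 x = variationOnFromTo h univ x y := by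
  have := variationOnFromTo.add hh.locallyBoundedVariationOn (mem_univ 0) (mem_univ x) (mem_univ y)
  linarith

/-- Variation is superadditive along a splitting of the increments. -/
theorem eVariationOn_add_le {a b h : ℝ → ℝ} (hh : BoundedVariationOn h univ)
    (hab : ∀ x y, |a y - a x| + |b y - b x| ≤ |h y - h x|) :
    (eVariationOn a univ).toReal + (eVariationOn b univ).toReal ≤ (eVariationOn h univ).toReal := by
  set W := variationOnFromTo h univ 0 with hW
  have hWle : ∀ x y, x ≤ y → |a y - a x| + |b y - b x| ≤ W y - W x := fun x y hxy =>
    (hab x y).trans (abs_sub_le_variationOnFromTo hh hxy)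
  have hWt : ∀ x y, x ≤ y → W y - W x ≤ (eVariationOn h univ).toReal := fun x y hxy => by
    rw [hW, variationOnFromTo_sub hh]
    exact variationOnFromTo_le_eVariationOn hxy hh
  have bv : ∀ c : ℝ → ℝ, (∀ x y, x ≤ y → |c y - c x| ≤ W y - W x) → BoundedVariationOn c univ := by
    intro c hc
    refine ne_top_of_le_ne_top hh (eVariationOn_le_of_forall_sum_le fun n p hp _ => ?_)
    rw [ENNReal.ofReal_le_iff_le_toReal hh]
    exact (sum_abs_le_sub_of_forall_abs_le hc n hp).trans (hWt _ _ (hp n.zero_le))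
  have ha : BoundedVariationOn a univ := bv a fun x y hxy =>
    le_trans (by linarith [abs_nonneg (b y - b x)]) (hWle x y hxy)
  have hb : BoundedVariationOn b univ := bv b fun x y hxy =>
    le_trans (by linarith [abs_nonneg (a y - a x)]) (hWle x y hxy)
  set A := variationOnFromTo a univ 0 with hA
  have hT : ∀ x y, x ≤ y → |b y - b x| ≤ (W y - A y) - (W x - A x) := by
    intro x y hxy
    have h0 : 0 ≤ W y - W x - |b y - b x| := by
      linarith [hWle x y hxy, abs_nonneg (a y - a x)]
    have : A y - A x ≤ W y - W x - |b y - b x| := by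
      rw [hA, variationOnFromTo_sub ha, variationOnFromTo.eq_of_le _ _ hxy]
      refine ENNReal.toReal_le_of_le_ofReal h0
        (eVariationOn_le_of_forall_sum_le fun n p hp hps => ENNReal.ofReal_le_ofReal ?_)
      have h1 : ∑ i ∈ Finset.range n, (|a (p (i + 1)) - a (p i)| + |b (p (i + 1)) - b (p i)|) ≤
          W (p n) - W (p 0) := by
        rw [← Finset.sum_range_sub (fun i => W (p i))]
        exact Finset.sum_le_sum fun i _ => hWle _ _ (hp i.le_succ)
      rw [Finset.sum_add_distrib] at h1
      have h2 : |b (p n) - b (p 0)| ≤ ∑ i ∈ Finset.range n, |b (p (i + 1)) - b (p i)| := by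
        rw [← Finset.sum_range_sub (fun i => b (p i))]
        exact Finset.abs_sum_le_sum_abs _ _
      have h3 := hWle x (p 0) (hps 0).2.1
      have h4 := hWle (p n) y (hps n).2.2
      have h5 := abs_nonneg (a (p 0) - a x)
      have h6 := abs_nonneg (a y - a (p n))
      have h7 : |b y - b x| ≤ |b (p 0) - b x| + |b (p n) - b (p 0)| + |b y - b (p n)| := by
        have := abs_add_three (b (p 0) - b x) (b (p n) - b (p 0)) (b y - b (p n))
        rwa [show b (p 0) - b x + (b (p n) - b (p 0)) + (b y - b (p n)) = b y - b x by ring] at this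
      linarith
    linarith
  have hAm : ∀ x y, x ≤ y → A x ≤ A y := fun x y hxy => by
    linarith [abs_sub_le_variationOnFromTo ha hxy, abs_nonneg (a y - a x)]
  have hTm : ∀ x y, x ≤ y → W x - A x ≤ W y - A y := fun x y hxy => by
    linarith [hT x y hxy, abs_nonneg (b y - b x)]
  rw [← le_sub_iff_add_le]
  have hfin : ∀ (m : ℕ) (q : ℕ → ℝ), Monotone q → (eVariationOn a univ).toReal ≤
      (eVariationOn h univ).toReal - ∑ i ∈ Finset.range m, |b (q (i + 1)) - b (q i)| := by
    intro m q hq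
    have key : ∀ (n : ℕ) (p : ℕ → ℝ), Monotone p →
        ∑ i ∈ Finset.range n, |a (p (i + 1)) - a (p i)| ≤
        (eVariationOn h univ).toReal - ∑ i ∈ Finset.range m, |b (q (i + 1)) - b (q i)| := by
      intro n p hp
      have h1 := sum_abs_le_sub_of_forall_abs_le
        (fun x y hxy => abs_sub_le_variationOnFromTo ha hxy) n hp
      have h2 := sum_abs_le_sub_of_forall_abs_le hT m hq
      have h3 := hp n.zero_le
      have h4 := hq m.zero_le
      have h5 := hAm _ _ (min_le_left (p 0) (q 0))
      have h6 := hAm _ _ (le_max_left (p n) (q m))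
      have h7 := hTm _ _ (min_le_right (p 0) (q 0))
      have h8 := hTm _ _ (le_max_right (p n) (q m))
      have h9 := hWt (min (p 0) (q 0)) (max (p n) (q m))
        ((min_le_left _ _).trans (h3.trans (le_max_left _ _)))
      linarith
    refine ENNReal.toReal_le_of_le_ofReal ?_
      (eVariationOn_le_of_forall_sum_le fun n p hp _ => ENNReal.ofReal_le_ofReal (key n p hp))
    simpa using key 0 (fun _ => 0) monotone_const
  have h0 : 0 ≤ (eVariationOn h univ).toReal - (eVariationOn a univ).toReal := by
    have := hfin 0 (fun _ => 0) monotone_const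
    simp at this
    linarith
  have : (eVariationOn b univ).toReal ≤
      (eVariationOn h univ).toReal - (eVariationOn a univ).toReal :=
    ENNReal.toReal_le_of_le_ofReal h0
      (eVariationOn_le_of_forall_sum_le fun n p hp _ => ENNReal.ofReal_le_ofReal
        (by linarith [hfin n p hp]))
  linarith

theorem abs_min_sub_add_abs_sub_min_sub (s t η : ℝ) :
    |min t η - min s η| + |(t - min t η) - (s - min s η)| = |t - s| := by
  rcases le_total s η with h1 | h1 <;> rcases le_total t η with h2 | h2 <;>
    rcases le_total s t with h3 | h3 <;> simp only [min_eq_left, min_eq_right, h1, h2] <;>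
    grind

theorem eventually_eVariationOn_min_le {h : ℝ → ℝ} (hh : BoundedVariationOn h univ) (h0 : ∀ x, 0 ≤ h x)
    {ε : ℝ} (hε : 0 < ε) :
    ∀ᶠ η in 𝓝[>] (0 : ℝ), (eVariationOn (fun x => min (h x) η) univ).toReal ≤ ε := by
  rcases eq_or_ne (eVariationOn h univ) 0 with hz | hz
  · refine Eventually.of_forall fun η => ?_
    have := eVariationOn_add_le hh (fun x y => (abs_min_sub_add_abs_sub_min_sub (h x) (h y) η).le)
    rw [hz] at this
    simp only [ENNReal.toReal_zero] at this
    linarith [ENNReal.toReal_nonneg (a := eVariationOn (fun x => h x - min (h x) η) univ)]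
  have hlim : ∀ x ∈ (univ : Set ℝ),
      Tendsto (fun η : ℝ => h x - min (h x) η) (𝓝[>] 0) (𝓝 (h x)) := by
    intro x _
    have : Tendsto (fun η : ℝ => h x - min (h x) η) (𝓝 0) (𝓝 (h x - min (h x) 0)) := by
      exact (by fun_prop : Continuous fun η : ℝ => h x - min (h x) η).tendsto 0
    rw [min_eq_right (h0 x), sub_zero] at this
    exact this.mono_left nhdsWithin_le_nhds
  have hlt : eVariationOn h univ - ENNReal.ofReal ε < eVariationOn h univ :=
    ENNReal.sub_lt_self hh hz (by simpa using hε)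
  have ev := eVariationOn.lowerSemicontinuous_aux hlim hlt
  filter_upwards [ev] with η h1
  have key := eVariationOn_add_le hh (fun x y => (abs_min_sub_add_abs_sub_min_sub (h x) (h y) η).le)
  have hbt : eVariationOn (fun x => h x - min (h x) η) univ ≠ ⊤ := by
    refine ne_top_of_le_ne_top hh (eVariationOn_le_of_forall_sum_le fun n p hp hps => ?_)
    rw [ENNReal.ofReal_le_iff_le_toReal hh]
    refine le_trans (Finset.sum_le_sum fun i _ => ?_) (hh.sum_abs_le n hp hps)
    rw [← abs_min_sub_add_abs_sub_min_sub (h (p i)) (h (p (i + 1))) η]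
    linarith [abs_nonneg (min (h (p (i + 1))) η - min (h (p i)) η)]
  have h3 : (eVariationOn h univ).toReal - ε ≤
      (eVariationOn (fun x => h x - min (h x) η) univ).toReal := by
    have := ENNReal.toReal_mono hbt h1.le
    refine le_trans ?_ this
    have h4 := ENNReal.le_toReal_sub (a := eVariationOn h univ) (b := ENNReal.ofReal ε)
      ENNReal.ofReal_ne_top
    rwa [ENNReal.toReal_ofReal hε.le] at h4
  linarith

theorem BoundedVariationOn.add_real {f g : ℝ → ℝ} (hf : BoundedVariationOn f univ)
    (hg : BoundedVariationOn g univ) : BoundedVariationOn (fun x => f x + g x) univ := by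
  refine ne_top_of_le_ne_top ENNReal.ofReal_ne_top
    (eVariationOn_le_of_forall_sum_le fun n p hp hps => ENNReal.ofReal_le_ofReal
      (le_trans ?_ (add_le_add (hf.sum_abs_le n hp hps) (hg.sum_abs_le n hp hps))))
  rw [← Finset.sum_add_distrib]
  refine Finset.sum_le_sum fun i _ => ?_
  rw [add_sub_add_comm]
  exact abs_add_le _ _

theorem BoundedVariationOn.neg_real {f : ℝ → ℝ} (hf : BoundedVariationOn f univ) :
    BoundedVariationOn (fun x => -f x) univ :=
  LipschitzWith.comp_boundedVariationOn LipschitzWith.id.neg hf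

theorem BoundedVariationOn.sub_real {f g : ℝ → ℝ} (hf : BoundedVariationOn f univ)
    (hg : BoundedVariationOn g univ) : BoundedVariationOn (fun x => f x - g x) univ := by
  simpa only [sub_eq_add_neg] using hf.add_real hg.neg_real

theorem BoundedVariationOn.min_const {h : ℝ → ℝ} (hh : BoundedVariationOn h univ) (η : ℝ) :
    BoundedVariationOn (fun x => min (h x) η) univ :=
  LipschitzWith.comp_boundedVariationOn (LipschitzWith.id.min_const η) hh

theorem BoundedVariationOn.uMax {f : ℝ → ℝ} (hf : BoundedVariationOn f univ)
    (h0 : ∀ x, |f x| ≤ uMax f x) : BoundedVariationOn (uMax f) univ := by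
  obtain ⟨B, hB0, hB⟩ := hf.exists_abs_le
  have habs : BoundedVariationOn (fun x => |f x|) univ :=
    LipschitzWith.comp_boundedVariationOn (f := fun t : ℝ => |t|) lipschitzWith_one_norm hf
  refine ne_top_of_le_ne_top (ENNReal.add_ne_top.2 ⟨habs, ENNReal.ofReal_ne_top⟩)
    (eVariationOn_le_of_peaks (d := B) habs h0 (fun x => ?_)
      fun x y z c hxy hyz h1 h2 hc => exists_abs_gt_of_uMax_peak hf hxy hyz h1 h2 hc)
  have : _root_.uMax f x ≤ B :=
    uMax_le_of_forall_le fun a b hab _ _ => mAvg_le_of_forall_le hf hab fun t _ => hB t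
  linarith [abs_nonneg (f x)]

theorem max_abs_sub_max_abs_le {e η u₁ u₂ f₁ f₂ g₁ g₂ : ℝ} (hη : 0 < η) (heη : 4 * e ≤ η)
    (h2 : |f₂| ≤ u₂) (d1 : |g₁ - f₁| ≤ e) (d2 : |g₂ - f₂| ≤ e) :
    max |g₂| (u₂ - e) - max |g₁| (u₁ - e) ≤ |u₂ - u₁| + |(g₂ - f₂) - (g₁ - f₁)| +
      |min (u₂ - f₂) η - min (u₁ - f₁) η| + |min (u₂ + f₂) η - min (u₁ + f₁) η| +
      4 * e / η * (|(u₂ - f₂) - (u₁ - f₁)| + |(u₂ + f₂) - (u₁ + f₁)|) := by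
  have he : 0 ≤ e := (abs_nonneg _).trans d1
  have hK : 0 ≤ 4 * e / η := by positivity
  have n1 := abs_nonneg (u₂ - u₁)
  have n2 := abs_nonneg ((g₂ - f₂) - (g₁ - f₁))
  have n3 := abs_nonneg (min (u₂ - f₂) η - min (u₁ - f₁) η)
  have n4 := abs_nonneg (min (u₂ + f₂) η - min (u₁ + f₁) η)
  have n5 := mul_nonneg hK (abs_nonneg ((u₂ - f₂) - (u₁ - f₁)))
  have n6 := mul_nonneg hK (abs_nonneg ((u₂ + f₂) - (u₁ + f₁)))
  have l1 := le_abs_self (u₂ - u₁)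
  have l2 := le_max_right |g₁| (u₁ - e)
  have l3 := le_max_left |g₁| (u₁ - e)
  have l4 := abs_le.1 (show |g₁| ≤ |g₁| from le_rfl)
  rw [abs_le] at d1 d2 h2
  rw [mul_add]
  have hbig : ∀ t, η / 2 ≤ |t| → 2 * e ≤ 4 * e / η * |t| := by
    intro t ht
    rw [div_mul_eq_mul_div, le_div_iff₀ hη]
    nlinarith
  rcases max_choice |g₂| (u₂ - e) with hm | hm
  · rw [hm]
    have hge : u₂ - e ≤ |g₂| := by rw [← hm]; exact le_max_right _ _
    rcases abs_choice g₂ with hs | hs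
    · rw [hs] at hge ⊢
      rcases le_or_gt (u₁ - f₁) η with hx | hx
      · rw [min_eq_left hx, min_eq_left (by linarith : u₂ - f₂ ≤ η)] at *
        linarith [neg_abs_le ((u₂ - f₂) - (u₁ - f₁)), le_abs_self ((g₂ - f₂) - (g₁ - f₁))]
      · have := hbig ((u₂ - f₂) - (u₁ - f₁))
          (by linarith [neg_abs_le ((u₂ - f₂) - (u₁ - f₁))])
        linarith
    · rw [hs] at hge ⊢
      rcases le_or_gt (u₁ + f₁) η with hx | hx
      · rw [min_eq_left hx, min_eq_left (by linarith : u₂ + f₂ ≤ η)] at *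
        linarith [neg_abs_le ((u₂ + f₂) - (u₁ + f₁)), neg_abs_le ((g₂ - f₂) - (g₁ - f₁))]
      · have := hbig ((u₂ + f₂) - (u₁ + f₁))
          (by linarith [neg_abs_le ((u₂ + f₂) - (u₁ + f₁))])
        linarith
  · rw [hm]
    linarith

/-- The variation of the maximal function is upper semicontinuous along BV convergence. -/
theorem exists_eVariationOn_uMax_le {f : ℝ → ℝ} (hf : BoundedVariationOn f univ)
    (hf0 : ∀ x, |f x| ≤ uMax f x) {ε : ℝ} (hε : 0 < ε) :
    ∃ δ > 0, ∀ g : ℝ → ℝ, BoundedVariationOn g univ → (∀ x, |g x| ≤ uMax g x) →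
      (∀ x, |g x - f x| ≤ δ) → eVariationOn (g - f) univ ≤ ENNReal.ofReal δ →
      (eVariationOn (uMax g) univ).toReal ≤ (eVariationOn (uMax f) univ).toReal + ε := by
  have hu := hf.uMax hf0
  have hp : BoundedVariationOn (fun x => uMax f x - f x) univ := hu.sub_real hf
  have hq : BoundedVariationOn (fun x => uMax f x + f x) univ := hu.add_real hf
  have hp0 : ∀ x, 0 ≤ uMax f x - f x := fun x => by linarith [le_abs_self (f x), hf0 x]
  have hq0 : ∀ x, 0 ≤ uMax f x + f x := fun x => by linarith [neg_abs_le (f x), hf0 x]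
  obtain ⟨η, ⟨H1, H2⟩, hη⟩ := (((eventually_eVariationOn_min_le hp hp0 (ε := ε / 5)
    (by positivity)).and (eventually_eVariationOn_min_le hq hq0 (ε := ε / 5)
    (by positivity))).and self_mem_nhdsWithin).exists
  have hη : 0 < η := hη
  set P := (eVariationOn (fun x => uMax f x - f x) univ).toReal
  set Q := (eVariationOn (fun x => uMax f x + f x) univ).toReal
  have hP0 : 0 ≤ P := ENNReal.toReal_nonneg
  have hQ0 : 0 ≤ Q := ENNReal.toReal_nonneg
  set e := min (η / 4) (min (ε / 25) (ε / 5 * η / (4 * (P + Q + 1)))) with he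
  have e0 : 0 < e := by positivity
  have e1 : 4 * e ≤ η := by linarith [min_le_left (η / 4) (min (ε / 25) (ε / 5 * η / (4 * (P + Q + 1))))]
  have e2 : e ≤ ε / 25 := (min_le_right _ _).trans (min_le_left _ _)
  have e3 : 4 * e / η * (P + Q) ≤ ε / 5 := by
    have : e ≤ ε / 5 * η / (4 * (P + Q + 1)) := (min_le_right _ _).trans (min_le_right _ _)
    rw [le_div_iff₀ (by positivity)] at this
    rw [div_mul_eq_mul_div, div_le_iff₀ hη]
    nlinarith
  refine ⟨e, e0, fun g hg hg0 hgf hV => ?_⟩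
  have hd : BoundedVariationOn (g - f) univ := ne_top_of_le_ne_top ENNReal.ofReal_ne_top hV
  have hV' : (eVariationOn (g - f) univ).toReal ≤ e := ENNReal.toReal_le_of_le_ofReal e0.le hV
  set w : ℝ → ℝ := fun x => max |g x| (uMax f x - e) with hw
  set U := (eVariationOn (uMax f) univ).toReal
  have hU0 : 0 ≤ U := ENNReal.toReal_nonneg
  have hwV : eVariationOn w univ ≤ ENNReal.ofReal (U + ε / 5 + ε / 5 + ε / 5 + e) := by
    refine eVariationOn_le_of_forall_sum_le fun n p hpm hps => ENNReal.ofReal_le_ofReal ?_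
    have s1 := hu.sum_abs_le n hpm hps
    have s2 := hd.sum_abs_le n hpm hps
    have s3 := (hp.min_const η).sum_abs_le n hpm hps
    have s4 := (hq.min_const η).sum_abs_le n hpm hps
    have s5 := mul_le_mul_of_nonneg_left (add_le_add (hp.sum_abs_le n hpm hps)
      (hq.sum_abs_le n hpm hps)) (by positivity : 0 ≤ 4 * e / η)
    rw [← Finset.sum_add_distrib, Finset.mul_sum] at s5
    have hpt : ∀ x y, |w y - w x| ≤ |uMax f y - uMax f x| + |(g y - f y) - (g x - f x)| +
        |min (uMax f y - f y) η - min (uMax f x - f x) η| +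
        |min (uMax f y + f y) η - min (uMax f x + f x) η| +
        4 * e / η * (|(uMax f y - f y) - (uMax f x - f x)| +
          |(uMax f y + f y) - (uMax f x + f x)|) := by
      intro x y
      refine abs_le'.2 ⟨max_abs_sub_max_abs_le hη e1 (hf0 y) (hgf x) (hgf y), ?_⟩
      have := max_abs_sub_max_abs_le (u₁ := uMax f y) hη e1 (hf0 x) (hgf y) (hgf x)
      rw [abs_sub_comm (uMax f x), abs_sub_comm (g x - f x), abs_sub_comm (min (uMax f x - f x) η),
        abs_sub_comm (min (uMax f x + f x) η), abs_sub_comm (uMax f x - f x),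
        abs_sub_comm (uMax f x + f x)] at this
      rw [neg_sub]
      exact this
    have hsum := Finset.sum_le_sum (s := Finset.range n) fun i _ => hpt (p i) (p (i + 1))
    simp only [Finset.sum_add_distrib] at hsum
    simp only [Pi.sub_apply] at s2
    linarith
  have hwb : BoundedVariationOn w univ := ne_top_of_le_ne_top ENNReal.ofReal_ne_top hwV
  have hfg : ∀ x, |f x - g x| ≤ e := fun x => by rw [abs_sub_comm]; exact hgf x
  have hfin := eVariationOn_le_of_peaks (u := uMax g) (w := w) (d := 2 * e) hwb
    (fun x => max_le (hg0 x) (by linarith [uMax_le_uMax_add hf hg hfg x]))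
    (fun x => by linarith [uMax_le_uMax_add hg hf hgf x, le_max_right |g x| (uMax f x - e)])
    fun x y z c hxy hyz h1 h2 hc => by
      obtain ⟨q, hq, hq'⟩ := exists_abs_gt_of_uMax_peak hg hxy hyz h1 h2 hc
      exact ⟨q, hq, hq'.trans_le (le_max_left _ _)⟩
  refine ENNReal.toReal_le_of_le_ofReal (by positivity) (hfin.trans ((add_le_add_left hwV _).trans ?_))
  rw [← ENNReal.ofReal_add (by positivity) (by positivity)]
  exact ENNReal.ofReal_le_ofReal (by linarith)

theorem monotone_variationOnFromTo {u : ℝ → ℝ} (hu : BoundedVariationOn u univ) :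
    Monotone (variationOnFromTo u univ 0) := fun x y hxy => by
  linarith [abs_sub_le_variationOnFromTo hu hxy, abs_nonneg (u y - u x)]

theorem BoundedVariationOn.ae_abs_deriv_le {u : ℝ → ℝ} (hu : BoundedVariationOn u univ) :
    ∀ᵐ x, |deriv u x| ≤ deriv (variationOnFromTo u univ 0) x := by
  filter_upwards [hu.locallyBoundedVariationOn.ae_differentiableAt,
    (monotone_variationOnFromTo hu).ae_differentiableAt] with x h1 h2
  have m1 : Monotone (variationOnFromTo u univ 0 - u) := fun y z hyz => by
    have := abs_sub_le_variationOnFromTo hu hyz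
    simp only [Pi.sub_apply]
    linarith [le_abs_self (u z - u y)]
  have m2 : Monotone (variationOnFromTo u univ 0 + u) := fun y z hyz => by
    have := abs_sub_le_variationOnFromTo hu hyz
    simp only [Pi.add_apply]
    linarith [neg_abs_le (u z - u y)]
  have d1 := m1.deriv_nonneg (x := x)
  have d2 := m2.deriv_nonneg (x := x)
  rw [deriv_sub h2 h1] at d1
  rw [deriv_add h2 h1] at d2
  exact abs_le.2 ⟨by linarith, by linarith⟩

theorem BoundedVariationOn.lintegral_enorm_deriv_le {u : ℝ → ℝ} (hu : BoundedVariationOn u univ) :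
    ∫⁻ x, ‖deriv u x‖ₑ ≤ eVariationOn u univ := by
  have hcov : AECover volume atTop (fun n : ℕ => Ioc (-(n : ℝ)) n) :=
    aecover_Ioc (tendsto_neg_atTop_atBot.comp tendsto_natCast_atTop_atTop)
      tendsto_natCast_atTop_atTop
  refine le_of_tendsto' (hcov.lintegral_tendsto_of_nat (measurable_deriv u).enorm.aemeasurable)
    fun n => ?_
  have hn : -(n : ℝ) ≤ n := by linarith [n.cast_nonneg (α := ℝ)]
  have hW := (monotone_variationOnFromTo hu).monotoneOn (uIcc (-(n : ℝ)) n)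
  have hi := hW.intervalIntegrable_deriv
  have hm := hW.intervalIntegral_deriv_mem_uIcc
  rw [uIcc_of_le (sub_nonneg.2 (monotone_variationOnFromTo hu hn)), variationOnFromTo_sub hu] at hm
  rw [intervalIntegrable_iff_integrableOn_Ioc_of_le hn] at hi
  rw [intervalIntegral.integral_of_le hn] at hm
  calc ∫⁻ x in Ioc (-(n : ℝ)) n, ‖deriv u x‖ₑ
      ≤ ∫⁻ x in Ioc (-(n : ℝ)) n, ENNReal.ofReal (deriv (variationOnFromTo u univ 0) x) := by
        refine lintegral_mono_ae (ae_restrict_of_ae ?_)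
        filter_upwards [hu.ae_abs_deriv_le] with x hx
        rw [Real.enorm_eq_ofReal_abs]
        exact ENNReal.ofReal_le_ofReal hx
    _ = ENNReal.ofReal (∫ x in Ioc (-(n : ℝ)) n, deriv (variationOnFromTo u univ 0) x) :=
        (ofReal_integral_eq_lintegral_ofReal hi (Eventually.of_forall fun x =>
          (monotone_variationOnFromTo hu).deriv_nonneg)).symm
    _ ≤ _ := by
        rw [ENNReal.ofReal_le_iff_le_toReal hu]
        exact hm.2.trans (variationOnFromTo_le_eVariationOn hn hu)

theorem abs_integral_sub_le {f : ℝ → ℝ} (hf : BoundedVariationOn f univ) {x y γ κ : ℝ}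
    (h : ∀ t, |t - x| ≤ |y - x| → |(|f t|) - γ| ≤ κ) :
    |(∫ t in x..y, |f t|) - γ * (y - x)| ≤ κ * |y - x| := by
  have h1 : (∫ t in x..y, |f t|) - γ * (y - x) = ∫ t in x..y, (|f t| - γ) := by
    rw [intervalIntegral.integral_sub (hf.intervalIntegrable_abs x y) intervalIntegrable_const]
    simp [mul_comm]
  rw [h1, ← Real.norm_eq_abs]
  refine intervalIntegral.norm_integral_le_of_norm_le_const fun t ht => h t ?_
  exact abs_sub_left_of_mem_uIcc (uIoc_subset_uIcc ht)

/-- Lower support line for the maximal function at a point where short intervals are not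
competitive, up to the error in the choice of the interval. -/
theorem exists_slope_of_lt_uMax {f : ℝ → ℝ} (hf : BoundedVariationOn f univ) {B : ℝ}
    (hB : ∀ t, |f t| ≤ B) {x γ κ ρ c : ℝ} (hγ0 : 0 ≤ γ) (hγB : γ ≤ B) (hρ : 0 < ρ)
    (h : ∀ t, |t - x| ≤ ρ → |(|f t|) - γ| ≤ κ) (hc : γ + κ ≤ c) (hcu : c < uMax f x) :
    ∃ p, |p| ≤ B / ρ ∧ ∀ κ' y, |y - x| ≤ ρ / 2 → (∀ t, |t - x| ≤ |y - x| → |(|f t|) - γ| ≤ κ') →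
      c + p * (y - x) - |y - x| * (2 / ρ) * (B / ρ * |y - x| + κ') ≤ uMax f y := by
  have hB0 : 0 ≤ B := (abs_nonneg _).trans (hB x)
  have err : ∀ p l R s κ', |p| ≤ B / ρ → ρ < l → |R| ≤ κ' * |s| → |s| ≤ ρ / 2 →
      p * s - |s| * (2 / ρ) * (B / ρ * |s| + κ') ≤ p * s + (p * s * s - R) / (l - s) := by
    intro p l R s κ' hp hl hR hs
    have s1 := le_abs_self s
    have s2 := abs_nonneg s
    have hls : ρ / 2 ≤ l - s := by linarith
    have hnum : -(|s| * (B / ρ * |s| + κ')) ≤ p * s * s - R := by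
      have := le_abs_self R
      have h3 : |p * s * s| ≤ B / ρ * |s| * |s| := by
        rw [abs_mul, abs_mul]
        gcongr
      have := neg_abs_le (p * s * s)
      nlinarith
    have hκ : 0 ≤ |s| * (B / ρ * |s| + κ') := by
      have := (abs_nonneg R).trans hR
      have : 0 ≤ B / ρ * |s| * |s| := by positivity
      nlinarith
    have : -(|s| * (B / ρ * |s| + κ')) * (2 / ρ) ≤ (p * s * s - R) / (l - s) := by
      rw [le_div_iff₀ (by linarith)]
      refine le_trans ?_ hnum
      have : 1 ≤ 2 / ρ * (l - s) := by
        rw [div_mul_eq_mul_div, le_div_iff₀ hρ]; linarith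
      nlinarith
    linarith
  have hslope : ∀ A l, 0 ≤ A → A ≤ B → ρ < l → |(A - γ) / l| ≤ B / ρ := by
    intro A l hA hA' hl
    rw [abs_div, abs_of_pos (hρ.trans hl)]
    have : |A - γ| ≤ B := abs_le.2 ⟨by linarith, by linarith⟩
    gcongr
  rcases exists_lt_mAvg_endpoint hf hcu with ⟨b, hxb, hb⟩ | ⟨a, hax, ha⟩
  · have hl : ρ < b - x := by
      by_contra! hl
      have := mAvg_le_of_forall_le hf (c := γ + κ) hxb fun t ht => by
        have := (abs_le.1 (h t (by rw [abs_of_pos (by linarith [ht.1])]; linarith [ht.2]))).2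
        linarith
      linarith
    have hA0 := mAvg_nonneg f hxb
    have hAB := mAvg_le_of_forall_le hf hxb fun t _ => hB t
    have hm := mAvg_mul_sub (f := f) hxb
    set A := mAvg f x b
    have hp := hslope A (b - x) hA0 hAB hl
    refine ⟨(A - γ) / (b - x), hp, fun κ' y hy ht => ?_⟩
    have hyb : y < b := by linarith [le_abs_self (y - x)]
    have hR := abs_integral_sub_le hf ht
    have he := err _ (b - x) _ (y - x) κ' hp hl hR hy
    have hu := mAvg_le_uMax hf hyb le_rfl hyb.le
    refine le_trans ?_ hu
    have hs := mAvg_split hf x y b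
    have : mAvg f y b = A + ((A - γ) / (b - x) * (y - x) + ((A - γ) / (b - x) * (y - x) * (y - x) -
        ((∫ t in x..y, |f t|) - γ * (y - x))) / (b - x - (y - x))) := by
      have e1 : b - x ≠ 0 := by linarith
      have e2 : b - x - (y - x) ≠ 0 := by linarith
      have e3 : b - y ≠ 0 := by linarith
      rw [mAvg, show (∫ t in y..b, |f t|) = A * (b - x) - ∫ t in x..y, |f t| by linarith,
        show b - y = b - x - (y - x) by ring]
      field_simp
      ring
    linarith
  · have hl : ρ < x - a := by
      by_contra! hl
      have := mAvg_le_of_forall_le hf (c := γ + κ) hax fun t ht => by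
        have := (abs_le.1 (h t (by rw [abs_of_neg (by linarith [ht.2])]; linarith [ht.1]))).2
        linarith
      linarith
    have hA0 := mAvg_nonneg f hax
    have hAB := mAvg_le_of_forall_le hf hax fun t _ => hB t
    have hm := mAvg_mul_sub (f := f) hax
    set A := mAvg f a x
    have hp := hslope A (x - a) hA0 hAB hl
    refine ⟨-((A - γ) / (x - a)), by rwa [abs_neg], fun κ' y hy ht => ?_⟩
    have hya : a < y := by linarith [neg_abs_le (y - x)]
    have hR := abs_integral_sub_le hf ht
    have he := err _ (x - a) (-((∫ t in x..y, |f t|) - γ * (y - x))) (x - y) κ' hp hl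
      (by rwa [abs_neg, abs_sub_comm x y]) (by rwa [abs_sub_comm x y])
    rw [abs_sub_comm x y] at he
    have hu := mAvg_le_uMax hf hya hya.le le_rfl
    refine le_trans ?_ hu
    have hs := mAvg_split hf a x y
    have : mAvg f a y = A + ((A - γ) / (x - a) * (x - y) + ((A - γ) / (x - a) * (x - y) * (x - y) -
        -((∫ t in x..y, |f t|) - γ * (y - x))) / (x - a - (x - y))) := by
      have e1 : x - a ≠ 0 := by linarith
      have e2 : x - a - (x - y) ≠ 0 := by linarith
      have e3 : y - a ≠ 0 := by linarith
      rw [mAvg, show (∫ t in a..y, |f t|) = A * (x - a) + ∫ t in x..y, |f t| by linarith,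
        show y - a = x - a - (x - y) by ring]
      field_simp
      ring
    linarith

theorem exists_slope_uMax {f : ℝ → ℝ} (hf : BoundedVariationOn f univ) {B : ℝ}
    (hB : ∀ t, |f t| ≤ B) {x γ κ ρ : ℝ} (hγ0 : 0 ≤ γ) (hγB : γ ≤ B) (hρ : 0 < ρ)
    (h : ∀ t, |t - x| ≤ ρ → |(|f t|) - γ| ≤ κ) (hu : γ + κ < uMax f x) :
    ∃ p, |p| ≤ B / ρ ∧ ∀ κ' y, |y - x| ≤ ρ / 2 → (∀ t, |t - x| ≤ |y - x| → |(|f t|) - γ| ≤ κ') →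
      uMax f x + p * (y - x) - |y - x| * (2 / ρ) * (B / ρ * |y - x| + κ') ≤ uMax f y := by
  have hex : ∀ n : ℕ, ∃ p, |p| ≤ B / ρ ∧ ∀ κ' y, |y - x| ≤ ρ / 2 →
      (∀ t, |t - x| ≤ |y - x| → |(|f t|) - γ| ≤ κ') →
      uMax f x - (uMax f x - (γ + κ)) * (1 / ((n : ℝ) + 1)) + p * (y - x) -
        |y - x| * (2 / ρ) * (B / ρ * |y - x| + κ') ≤ uMax f y := by
    intro n
    have h1 : 1 / ((n : ℝ) + 1) ≤ 1 := by
      rw [div_le_one (by positivity)]; linarith [n.cast_nonneg (α := ℝ)]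
    have h2 : 0 < 1 / ((n : ℝ) + 1) := by positivity
    exact exists_slope_of_lt_uMax hf hB hγ0 hγB hρ h (by nlinarith) (by nlinarith)
  choose p hp hp' using hex
  obtain ⟨q, hq, φ, hφ, hlim⟩ := isCompact_Icc.tendsto_subseq
    (x := p) (s := Icc (-(B / ρ)) (B / ρ)) fun n => ⟨(abs_le.1 (hp n)).1, (abs_le.1 (hp n)).2⟩
  refine ⟨q, abs_le.2 ⟨hq.1, hq.2⟩, fun κ' y hy ht => ?_⟩
  have ht1 : Tendsto (fun n => 1 / (((φ n : ℕ) : ℝ) + 1)) atTop (𝓝 0) :=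
    tendsto_one_div_add_atTop_nhds_zero_nat.comp hφ.tendsto_atTop
  have := ((tendsto_const_nhds (x := uMax f x)).sub
    (ht1.const_mul (uMax f x - (γ + κ)))).add (hlim.mul_const (y - x))
  have := this.sub_const (|y - x| * (2 / ρ) * (B / ρ * |y - x| + κ'))
  rw [mul_zero, sub_zero] at this
  exact le_of_tendsto' this fun n => hp' (φ n) κ' y hy ht

/-- The maximal function is locally Lipschitz off the contact set, at continuity points. -/
theorem exists_lipschitzOnWith_uMax {f : ℝ → ℝ} (hf : BoundedVariationOn f univ) {x : ℝ}
    (hx : |f x| < uMax f x) (hc : ContinuousAt f x) :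
    ∃ K : NNReal, ∃ s ∈ 𝓝 x, LipschitzOnWith K (uMax f) s := by
  obtain ⟨B, hB0, hB⟩ := hf.exists_abs_le
  obtain ⟨m, hm, hm'⟩ := exists_between hx
  set θ := m - |f x| with hθ
  have hθ0 : 0 < θ := by linarith
  obtain ⟨ρ, hρ, hρ'⟩ := Metric.continuousAt_iff.1 hc.abs θ hθ0
  obtain ⟨σ, hσ, hσ'⟩ := Metric.mem_nhds_iff.1
    ((continuous_uMax hf).continuousAt.eventually_const_lt hm')
  set r := ρ / 2 with hr
  have hr0 : 0 < r := by positivity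
  set K : ℝ := B / r + 2 / r * (B / r * r + θ) with hK
  have hK0 : 0 ≤ K := by positivity
  refine ⟨K.toNNReal, Metric.ball x (min σ (r / 4)), Metric.ball_mem_nhds _ (by positivity), ?_⟩
  have key : ∀ y ∈ Metric.ball x (min σ (r / 4)), ∀ z ∈ Metric.ball x (min σ (r / 4)),
      uMax f y - uMax f z ≤ K * |z - y| := by
    intro y hy z hz
    rw [Metric.mem_ball, lt_min_iff, Real.dist_eq] at hy hz
    have hzy : |z - y| ≤ r / 2 := by
      have := abs_sub_le z x y
      rw [abs_sub_comm x y] at this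
      linarith [hy.2, hz.2]
    have hnear : ∀ t, |t - y| ≤ r → |(|f t|) - (|f x|)| ≤ θ := by
      intro t ht
      have h1 := abs_sub_le t y x
      exact le_of_lt (hρ' (x := t) (by rw [Real.dist_eq]; linarith [hy.2]))
    have hy1 : m < uMax f y := hσ' (by rw [Metric.mem_ball, Real.dist_eq]; exact hy.1)
    obtain ⟨p, hp, hp'⟩ := exists_slope_uMax hf hB (abs_nonneg (f x)) (hB x) hr0 hnear
      (by linarith)
    have h2 := hp' θ z hzy fun t ht => hnear t (by linarith)
    have h3 : -(B / r * |z - y|) ≤ p * (z - y) := by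
      have := neg_abs_le (p * (z - y))
      rw [abs_mul] at this
      nlinarith [mul_le_mul_of_nonneg_right hp (abs_nonneg (z - y))]
    have h4 : |z - y| * (2 / r) * (B / r * |z - y| + θ) ≤ |z - y| * (2 / r) * (B / r * r + θ) := by
      have : |z - y| ≤ r := by linarith
      gcongr
    rw [hK]
    linarith
  refine LipschitzOnWith.of_dist_le_mul fun y hy z hz => ?_
  rw [Real.dist_eq, Real.dist_eq, Real.coe_toNNReal _ hK0]
  refine abs_le'.2 ⟨?_, ?_⟩
  · rw [abs_sub_comm]; exact key y hy z hz
  · rw [neg_sub]; exact key z hz y hy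

theorem HasDerivAt.exists_abs_sub_le {v : ℝ → ℝ} {v' x : ℝ} (h : HasDerivAt v v' x) {e : ℝ}
    (he : 0 < e) : ∃ δ > 0, ∀ y, |y - x| ≤ δ → |v y - v x - v' * (y - x)| ≤ e * |y - x| := by
  obtain ⟨δ, hδ, H⟩ := Metric.eventually_nhds_iff_ball.1 (h.isLittleO.bound he)
  refine ⟨δ / 2, by positivity, fun y hy => ?_⟩
  have := H y (by rw [Metric.mem_ball, Real.dist_eq]; linarith)
  simpa [mul_comm] using this

theorem HasDerivAt.abs_sub_le_of_support {v : ℝ → ℝ} {v' x p c δ : ℝ} (h : HasDerivAt v v' x)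
    (hδ : 0 < δ) (hs : ∀ y, |y - x| ≤ δ → v x + p * (y - x) - c * |y - x| ≤ v y) :
    |v' - p| ≤ c := by
  refine le_of_forall_pos_le_add fun e he => ?_
  obtain ⟨δ', hδ', H⟩ := h.exists_abs_sub_le he
  set s := min δ δ' with hsd
  have s0 : 0 < s := lt_min hδ hδ'
  have a1 : |x + s - x| = s := by rw [add_sub_cancel_left, abs_of_pos s0]
  have a2 : |x - s - x| = s := by
    rw [show x - s - x = -s by ring, abs_neg, abs_of_pos s0]
  have h1 := hs (x + s) (by rw [a1]; exact min_le_left _ _)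
  have h2 := (abs_le.1 (H (x + s) (by rw [a1]; exact min_le_right _ _))).2
  have h3 := hs (x - s) (by rw [a2]; exact min_le_left _ _)
  have h4 := (abs_le.1 (H (x - s) (by rw [a2]; exact min_le_right _ _))).2
  rw [a1] at h1 h2
  rw [a2] at h3 h4
  have h5 : (p - v') * s ≤ (c + e) * s := by nlinarith
  have h6 : (v' - p) * s ≤ (c + e) * s := by nlinarith
  exact abs_le'.2 ⟨le_of_mul_le_mul_right h6 s0, by linarith [le_of_mul_le_mul_right h5 s0]⟩

theorem tendsto_deriv_uMax {f : ℝ → ℝ} (hf : BoundedVariationOn f univ) {G : ℕ → ℝ → ℝ}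
    (hG : ∀ j, BoundedVariationOn (G j) univ) {e : ℕ → ℝ} (he : Tendsto e atTop (𝓝 0))
    (hGf : ∀ j t, |G j t - f t| ≤ e j) {x : ℝ} (hx : |f x| < uMax f x) (hc : ContinuousAt f x)
    (hd : DifferentiableAt ℝ (uMax f) x) (hdG : ∀ j, DifferentiableAt ℝ (uMax (G j)) x) :
    Tendsto (fun j => deriv (uMax (G j)) x) atTop (𝓝 (deriv (uMax f) x)) := by
  obtain ⟨B₀, hB₀0, hB₀⟩ := hf.exists_abs_le
  set B := B₀ + 1 with hB
  set θ := (uMax f x - |f x|) / 4 with hθ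
  have hθ0 : 0 < θ := by linarith
  obtain ⟨ρ₀, hρ₀, hρ'⟩ := Metric.continuousAt_iff.1 hc.abs θ hθ0
  set ρ := ρ₀ / 2 with hρdef
  have hρ : 0 < ρ := by positivity
  have hnear : ∀ t, |t - x| ≤ ρ → |(|f t|) - (|f x|)| ≤ θ := fun t ht =>
    (hρ' (x := t) (by rw [Real.dist_eq]; linarith)).le
  rw [Metric.tendsto_atTop']
  intro ξ hξ
  set K := 2 / ρ with hK
  have hK0 : 0 < K := by positivity
  set κ := ξ / 16 / K with hκ
  have hκ0 : 0 < κ := by positivity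
  have hκK : K * κ = ξ / 16 := by rw [hκ]; field_simp
  obtain ⟨δ₁, hδ₁, H1⟩ := Metric.continuousAt_iff.1 hc.abs κ hκ0
  obtain ⟨δ₂, hδ₂, H2⟩ := hd.hasDerivAt.exists_abs_sub_le (show 0 < ξ / 16 by positivity)
  set δ₃ := ξ / 16 / (K * (B / ρ)) with hδ₃
  have hBρ : 0 < B / ρ := by positivity
  have hδ₃0 : 0 < δ₃ := by positivity
  have hδ₃' : K * (B / ρ) * δ₃ = ξ / 16 := mul_div_cancel₀ _ (by positivity)
  set δ := min (min (δ₁ / 2) δ₂) (min (ρ / 2) δ₃) with hδ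
  have hδ0 : 0 < δ := by positivity
  have d1 : δ ≤ δ₁ / 2 := (min_le_left _ _).trans (min_le_left _ _)
  have d2 : δ ≤ δ₂ := (min_le_left _ _).trans (min_le_right _ _)
  have d3 : δ ≤ ρ / 2 := (min_le_right _ _).trans (min_le_left _ _)
  have d4 : δ ≤ δ₃ := (min_le_right _ _).trans (min_le_right _ _)
  have hev : ∀ᶠ j in atTop, e j < min (min 1 θ) (min κ (ξ / 16 * δ)) :=
    he.eventually_lt_const (by positivity)
  obtain ⟨N, hN⟩ := eventually_atTop.1 hev
  refine ⟨N, fun j hj => ?_⟩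
  have hj := hN j hj.le
  simp only [lt_min_iff] at hj
  obtain ⟨⟨j1, j2⟩, j3, j4⟩ := hj
  have hej : 0 ≤ e j := (abs_nonneg _).trans (hGf j x)
  have habs : ∀ t, |(|G j t|) - (|f t|)| ≤ e j := fun t =>
    (abs_abs_sub_abs_le_abs_sub _ _).trans (hGf j t)
  have htri : ∀ t κ', |(|f t|) - (|f x|)| ≤ κ' → |(|G j t|) - (|f x|)| ≤ κ' + e j := fun t κ' ht => by
    linarith [abs_sub_le (|G j t|) (|f t|) (|f x|), habs t]
  have hfG : ∀ t, |f t - G j t| ≤ e j := fun t => by rw [abs_sub_comm]; exact hGf j t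
  have hu1 := uMax_le_uMax_add hf (hG j) hfG
  have hu2 := uMax_le_uMax_add (hG j) hf (hGf j)
  have hBG : ∀ t, |G j t| ≤ B := fun t => by
    linarith [(abs_le.1 (habs t)).2, hB₀ t]
  obtain ⟨p, hp, hp'⟩ := exists_slope_uMax (hG j) hBG (abs_nonneg (f x)) (by linarith [hB₀ x]) hρ
    (fun t ht => htri t θ (hnear t ht)) (by linarith [hu1 x])
  have hsupp : ∀ y, |y - x| ≤ δ →
      uMax (G j) x + p * (y - x) - 3 * ξ / 16 * |y - x| ≤ uMax (G j) y := by
    intro y hy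
    refine le_trans ?_ (hp' (κ + e j) y (hy.trans d3) fun t ht => htri t κ
      (H1 (x := t) (by rw [Real.dist_eq]; linarith)).le)
    have h1 : K * (B / ρ * |y - x| + (κ + e j)) ≤ 3 * ξ / 16 := by
      have i1 : K * (B / ρ * |y - x|) ≤ K * (B / ρ) * δ₃ := by
        rw [← mul_assoc]; gcongr; linarith
      have i2 : K * e j ≤ K * κ := by gcongr
      linarith
    have h2 := mul_le_mul_of_nonneg_left h1 (abs_nonneg (y - x))
    linarith
  have hA := (hdG j).hasDerivAt.abs_sub_le_of_support hδ0 hsupp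
  have a1 : |x + δ - x| = δ := by rw [add_sub_cancel_left, abs_of_pos hδ0]
  have a2 : |x - δ - x| = δ := by
    rw [show x - δ - x = -δ by ring, abs_neg, abs_of_pos hδ0]
  have h1 := hsupp (x + δ) a1.le
  have h2 := (abs_le.1 (H2 (x + δ) (by rw [a1]; exact d2))).2
  have h3 := hsupp (x - δ) a2.le
  have h4 := (abs_le.1 (H2 (x - δ) (by rw [a2]; exact d2))).2
  rw [a1] at h1 h2
  rw [a2] at h3 h4
  set v := deriv (uMax f) x
  have h5 : (p - v) * δ ≤ (6 * ξ / 16) * δ := by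
    linarith [hu1 x, hu2 x, hu1 (x + δ), hu2 (x + δ)]
  have h6 : (v - p) * δ ≤ (6 * ξ / 16) * δ := by
    linarith [hu1 x, hu2 x, hu1 (x - δ), hu2 (x - δ)]
  have h7 := le_of_mul_le_mul_right h5 hδ0
  have h8 := le_of_mul_le_mul_right h6 hδ0
  rw [Real.dist_eq]
  rw [abs_le] at hA
  exact abs_lt.2 ⟨by linarith [hA.1], by linarith [hA.2]⟩

theorem LipschitzOnWith.volume_image_eq_zero {K : NNReal} {h : ℝ → ℝ} {s : Set ℝ}
    (hh : LipschitzOnWith K h s) (hs : volume s = 0) : volume (h '' s) = 0 := by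
  have := hh.hausdorffMeasure_image_le (d := 1) zero_le_one
  rw [hausdorffMeasure_real, hs, mul_zero] at this
  exact le_antisymm this zero_le

theorem volume_image_eq_zero_of_hasDerivAt_zero {h : ℝ → ℝ} {s : Set ℝ}
    (hs : ∀ x ∈ s, HasDerivAt h 0 x) : volume (h '' s) = 0 := by
  refine addHaar_image_eq_zero_of_det_fderivWithin_eq_zero volume (f' := fun _ => 0)
    (fun x hx => ?_) fun x _ => ?_
  · simpa using (hs x hx).hasFDerivAt.hasFDerivWithinAt (s := s)
  · simp

/-- A function of bounded variation factors through its variation function by a contraction. -/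
theorem BoundedVariationOn.exists_lipschitz_comp {g : ℝ → ℝ} (hg : BoundedVariationOn g univ) :
    ∃ H : ℝ → ℝ, LipschitzWith 1 H ∧ ∀ x, H (variationOnFromTo g univ 0 x) = g x := by
  set V := variationOnFromTo g univ 0
  have hV : ∀ x y, |g x - g y| ≤ |V x - V y| := by
    intro x y
    rcases le_total x y with h | h
    · rw [abs_sub_comm, abs_sub_comm (V x)]
      exact (abs_sub_le_variationOnFromTo hg h).trans (le_abs_self _)
    · exact (abs_sub_le_variationOnFromTo hg h).trans (le_abs_self _)
  have hinv : ∀ x, V (Function.invFun V (V x)) = V x := fun x => Function.invFun_eq ⟨x, rfl⟩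
  have hL : LipschitzOnWith 1 (fun v => g (Function.invFun V v)) (range V) := by
    refine LipschitzOnWith.of_dist_le_mul ?_
    rintro _ ⟨x, rfl⟩ _ ⟨y, rfl⟩
    have := hV (Function.invFun V (V x)) (Function.invFun V (V y))
    rw [hinv, hinv] at this
    simpa [Real.dist_eq] using this
  obtain ⟨H, hH, hHV⟩ := hL.extend_real
  refine ⟨H, hH, fun x => ?_⟩
  rw [← hHV ⟨x, rfl⟩]
  have := hV (Function.invFun V (V x)) x
  rw [hinv, sub_self, abs_zero] at this
  exact sub_eq_zero.1 (abs_eq_zero.1 (le_antisymm this (abs_nonneg _)))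

theorem exists_rat_eq_of_contact_right {f V : ℝ → ℝ} (hf : BoundedVariationOn f univ)
    (hV : Monotone V) {x d r : ℝ} (hx : ContinuousAt V x) (hd : 0 < d) (hr : 0 < r)
    (h : ∀ t, V x ≤ V t → V t < V x + r → |f x| + d * (V t - V x) ≤ |f t|)
    (hm : ∀ b, x < b → mAvg f x b ≤ |f x|) : ∃ q : ℚ, V q = V x := by
  obtain ⟨s, hs, hs'⟩ := Metric.continuousAt_iff.1 hx r hr
  obtain ⟨q, hq, hq'⟩ := exists_rat_btwn (show x < x + s / 2 by linarith)
  refine ⟨q, le_antisymm ?_ (hV hq.le)⟩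
  by_contra! hlt
  set b := x + s / 2 with hb
  have hlow : ∀ t, x ≤ t → t ≤ b → |f x| + d * (V t - V x) ≤ |f t| := by
    intro t h1 h2
    refine h t (hV h1) ?_
    have := hs' (x := t) (by rw [Real.dist_eq, abs_of_nonneg (by linarith)]; linarith)
    rw [Real.dist_eq] at this
    linarith [le_abs_self (V t - V x)]
  have l1 : |f x| ≤ mAvg f x q := le_mAvg_of_forall_le hf hq fun t ht => by
    have := hlow t ht.1.le (ht.2.le.trans hq'.le)
    nlinarith [hV ht.1.le]
  have l2 : |f x| + d * (V q - V x) ≤ mAvg f q b := le_mAvg_of_forall_le hf hq' fun t ht => by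
    refine le_trans ?_ (hlow t (hq.le.trans ht.1.le) ht.2.le)
    nlinarith [hV ht.1.le]
  have l3 := hm b (hq.trans hq')
  have e := mAvg_split hf x q b
  rw [← mAvg_mul_sub hq, ← mAvg_mul_sub hq', ← mAvg_mul_sub (hq.trans hq')] at e
  have m1 := mul_le_mul_of_nonneg_right l1 (sub_pos.2 hq).le
  have m2 := mul_le_mul_of_nonneg_right l2 (sub_pos.2 hq').le
  have m3 := mul_le_mul_of_nonneg_right l3 (sub_pos.2 (hq.trans hq')).le
  have m4 : 0 < d * (V q - V x) * (b - q) := mul_pos (mul_pos hd (by linarith)) (by linarith)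
  nlinarith

theorem exists_rat_eq_of_contact_left {f V : ℝ → ℝ} (hf : BoundedVariationOn f univ)
    (hV : Monotone V) {x d r : ℝ} (hx : ContinuousAt V x) (hd : 0 < d) (hr : 0 < r)
    (h : ∀ t, V t ≤ V x → V x - r < V t → |f x| + d * (V x - V t) ≤ |f t|)
    (hm : ∀ a, a < x → mAvg f a x ≤ |f x|) : ∃ q : ℚ, V q = V x := by
  obtain ⟨s, hs, hs'⟩ := Metric.continuousAt_iff.1 hx r hr
  obtain ⟨q, hq', hq⟩ := exists_rat_btwn (show x - s / 2 < x by linarith)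
  refine ⟨q, le_antisymm (hV hq.le) ?_⟩
  by_contra! hlt
  set a := x - s / 2 with ha
  have hlow : ∀ t, t ≤ x → a ≤ t → |f x| + d * (V x - V t) ≤ |f t| := by
    intro t h1 h2
    refine h t (hV h1) ?_
    have := hs' (x := t) (by rw [Real.dist_eq, abs_of_nonpos (by linarith)]; linarith)
    rw [Real.dist_eq] at this
    linarith [neg_abs_le (V t - V x)]
  have l1 : |f x| ≤ mAvg f q x := le_mAvg_of_forall_le hf hq fun t ht => by
    have := hlow t ht.2.le (hq'.le.trans ht.1.le)
    nlinarith [hV ht.2.le]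
  have l2 : |f x| + d * (V x - V q) ≤ mAvg f a q := le_mAvg_of_forall_le hf hq' fun t ht => by
    refine le_trans ?_ (hlow t (ht.2.le.trans hq.le) ht.1.le)
    nlinarith [hV ht.2.le]
  have l3 := hm a (hq'.trans hq)
  have e := mAvg_split hf a q x
  rw [← mAvg_mul_sub hq, ← mAvg_mul_sub hq', ← mAvg_mul_sub (hq'.trans hq)] at e
  have m1 := mul_le_mul_of_nonneg_right l1 (sub_pos.2 hq).le
  have m2 := mul_le_mul_of_nonneg_right l2 (sub_pos.2 hq').le
  have m3 := mul_le_mul_of_nonneg_right l3 (sub_pos.2 (hq'.trans hq)).le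
  have m4 : 0 < d * (V x - V q) * (q - a) := mul_pos (mul_pos hd (by linarith)) (by linarith)
  nlinarith

theorem BoundedVariationOn.abs_real {f : ℝ → ℝ} (hf : BoundedVariationOn f univ) :
    BoundedVariationOn (fun x => |f x|) univ :=
  LipschitzWith.comp_boundedVariationOn (f := fun t : ℝ => |t|) lipschitzWith_one_norm hf

/-- The values taken on the contact set form a null set. -/
theorem volume_image_contact_eq_zero {f : ℝ → ℝ} (hf : BoundedVariationOn f univ) {s : Set ℝ}
    (hs : ∀ x ∈ s, uMax f x = |f x|)
    (hc : ∀ x ∈ s, ContinuousAt (variationOnFromTo (fun t => |f t|) univ 0) x) :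
    volume (uMax f '' s) = 0 := by
  have hg := hf.abs_real
  obtain ⟨H, hH, hHV⟩ := hg.exists_lipschitz_comp
  set V := variationOnFromTo (fun t => |f t|) univ 0
  have hVm : Monotone V := monotone_variationOnFromTo hg
  have h1 : volume (H '' {v | ¬DifferentiableAt ℝ H v}) = 0 :=
    (hH.lipschitzOnWith (s := _)).volume_image_eq_zero (ae_iff.1 hH.ae_differentiableAt_real)
  have h2 : volume (H '' {v | HasDerivAt H 0 v}) = 0 :=
    volume_image_eq_zero_of_hasDerivAt_zero fun x hx => hx
  have h3 : volume (H '' range fun q : ℚ => V q) = 0 :=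
    ((countable_range _).image _).measure_zero _
  refine measure_mono_null ?_ (measure_union_null (measure_union_null h1 h2) h3)
  rintro _ ⟨x, hx, rfl⟩
  rw [hs x hx, ← hHV x, ← image_union, ← image_union]
  refine mem_image_of_mem _ ?_
  by_cases hd : DifferentiableAt ℝ H (V x)
  swap
  · exact Or.inl (Or.inl hd)
  have hD := hd.hasDerivAt
  rcases lt_trichotomy (deriv H (V x)) 0 with h0 | h0 | h0
  · obtain ⟨r, hr, hr'⟩ := hD.exists_abs_sub_le (show 0 < -(deriv H (V x)) / 2 by linarith)
    right
    refine exists_rat_eq_of_contact_left hf hVm (hc x hx) (show 0 < -(deriv H (V x)) / 2 by linarith)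
      hr (fun t ht ht' => ?_) fun a ha => ?_
    · have := hr' (V t) (by rw [abs_of_nonpos (by linarith)]; linarith)
      rw [hHV, hHV, abs_of_nonpos (by linarith : V t - V x ≤ 0), abs_le] at this
      linarith [this.1]
    · rw [← hs x hx]
      exact mAvg_le_uMax hf ha ha.le le_rfl
  · rw [h0] at hD
    exact Or.inl (Or.inr hD)
  · obtain ⟨r, hr, hr'⟩ := hD.exists_abs_sub_le (show 0 < deriv H (V x) / 2 by linarith)
    right
    refine exists_rat_eq_of_contact_right hf hVm (hc x hx) (show 0 < deriv H (V x) / 2 by linarith)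
      hr (fun t ht ht' => ?_) fun b hb => ?_
    · have := hr' (V t) (by rw [abs_of_nonneg (by linarith)]; linarith)
      rw [hHV, hHV, abs_of_nonneg (by linarith : 0 ≤ V t - V x), abs_le] at this
      linarith [this.1]
    · rw [← hs x hx]
      exact mAvg_le_uMax hf hb le_rfl hb.le

theorem BoundedVariationOn.measurable_real {f : ℝ → ℝ} (hf : BoundedVariationOn f univ) :
    Measurable f := by
  obtain ⟨p, q, hp, hq, rfl⟩ := hf.locallyBoundedVariationOn.exists_monotoneOn_sub_monotoneOn
  exact (monotoneOn_univ.1 hp).measurable.sub (monotoneOn_univ.1 hq).measurable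

theorem BoundedVariationOn.countable_not_continuousAt_real {f : ℝ → ℝ}
    (hf : BoundedVariationOn f univ) : {x | ¬ContinuousAt f x}.Countable := by
  obtain ⟨p, q, hp, hq, rfl⟩ := hf.locallyBoundedVariationOn.exists_monotoneOn_sub_monotoneOn
  refine ((monotoneOn_univ.1 hp).countable_not_continuousAt.union
    (monotoneOn_univ.1 hq).countable_not_continuousAt).mono fun x hx => ?_
  by_contra h
  simp only [mem_union, mem_ofPred_eq, not_or, not_not] at h
  exact hx (h.1.sub h.2)

/-- The maximal function maps the complement of the set of differentiability points off the
contact set onto a null set. -/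
theorem volume_uMax_image_compl_eq_zero {f : ℝ → ℝ} (hf : BoundedVariationOn f univ)
    (h0 : ∀ x, |f x| ≤ uMax f x) :
    volume (uMax f '' ({x | |f x| < uMax f x} ∩ {x | DifferentiableAt ℝ (uMax f) x})ᶜ) = 0 := by
  set V := variationOnFromTo (fun t => |f t|) univ 0
  have hu := hf.uMax h0
  have c1 : volume (uMax f '' {x | ¬ContinuousAt f x}) = 0 :=
    (hf.countable_not_continuousAt_real.image _).measure_zero _
  have c2 : volume (uMax f '' {x | ¬ContinuousAt V x}) = 0 :=
    ((monotone_variationOnFromTo hf.abs_real).countable_not_continuousAt.image _).measure_zero _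
  have c3 : volume (uMax f '' {x | uMax f x = |f x| ∧ ContinuousAt V x}) = 0 :=
    volume_image_contact_eq_zero hf (fun x hx => hx.1) fun x hx => hx.2
  have c4 : volume (uMax f '' {x | (|f x| < uMax f x ∧ ContinuousAt f x) ∧
      ¬DifferentiableAt ℝ (uMax f) x}) = 0 := by
    set S := {x | (|f x| < uMax f x ∧ ContinuousAt f x) ∧ ¬DifferentiableAt ℝ (uMax f) x}
    have hS : volume S = 0 := measure_mono_null (fun x hx => hx.2)
      (ae_iff.1 hu.locallyBoundedVariationOn.ae_differentiableAt)
    choose! K s hs hL using fun x (hx : x ∈ S) =>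
      exists_lipschitzOnWith_uMax hf hx.1.1 hx.1.2
    obtain ⟨t, htS, htc, hcov⟩ := TopologicalSpace.countable_cover_nhdsWithin (s := S) (f := s)
      fun x hx => mem_nhdsWithin_of_mem_nhds (hs x hx)
    have : uMax f '' S ⊆ ⋃ x ∈ t, uMax f '' (s x ∩ S) := by
      rintro _ ⟨x, hx, rfl⟩
      obtain ⟨y, hy, hxy⟩ := mem_iUnion₂.1 (hcov hx)
      exact mem_iUnion₂.2 ⟨y, hy, x, ⟨hxy, hx⟩, rfl⟩
    refine measure_mono_null this ((measure_biUnion_null_iff htc).2 fun x hx => ?_)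
    exact ((hL x (htS hx)).mono inter_subset_left).volume_image_eq_zero
      (measure_mono_null inter_subset_right hS)
  refine measure_mono_null ?_ (measure_union_null (measure_union_null c1 c2)
    (measure_union_null c3 c4))
  rw [← image_union, ← image_union, ← image_union]
  refine image_mono fun x hx => ?_
  simp only [mem_compl_iff, mem_inter_iff, mem_ofPred_eq, mem_union] at hx ⊢
  have := h0 x
  by_cases h1 : ContinuousAt f x
  · by_cases h2 : ContinuousAt V x
    · by_cases h3 : |f x| < uMax f x
      · exact Or.inr (Or.inr ⟨⟨h3, h1⟩, fun h4 => hx ⟨h3, h4⟩⟩)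
      · exact Or.inr (Or.inl ⟨le_antisymm (not_lt.1 h3) this, h2⟩)
    · exact Or.inl (Or.inr h2)
  · exact Or.inl (Or.inl h1)

theorem volume_image_le_lintegral_enorm_deriv {h : ℝ → ℝ} {s : Set ℝ} (hs : MeasurableSet s)
    (hd : ∀ x ∈ s, DifferentiableAt ℝ h x) : volume (h '' s) ≤ ∫⁻ x in s, ‖deriv h x‖ₑ := by
  have := addHaar_image_le_lintegral_abs_det_fderiv volume hs
    fun x hx => (hd x hx).hasDerivAt.hasFDerivAt.hasFDerivWithinAt (s := s)
  simpa [Real.enorm_eq_ofReal_abs] using this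

theorem measurableSet_abs_lt_uMax {f : ℝ → ℝ} (hf : BoundedVariationOn f univ) :
    MeasurableSet {x | |f x| < uMax f x} :=
  measurableSet_lt hf.measurable_real.abs (continuous_uMax hf).measurable

/-- The variation of the maximal function is carried by its derivative off the contact set. -/
theorem eVariationOn_uMax_le_lintegral {f : ℝ → ℝ} (hf : BoundedVariationOn f univ)
    (h0 : ∀ x, |f x| ≤ uMax f x) :
    eVariationOn (uMax f) univ ≤ ∫⁻ x in {x | |f x| < uMax f x}, ‖deriv (uMax f) x‖ₑ := by
  set E := {x | |f x| < uMax f x} with hE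
  have hEm : MeasurableSet E := measurableSet_abs_lt_uMax hf
  set D := {x | DifferentiableAt ℝ (uMax f) x} with hD
  have hDm : MeasurableSet D := measurableSet_of_differentiableAt ℝ (uMax f)
  set μ := (volume.restrict E).withDensity fun x => ‖deriv (uMax f) x‖ₑ with hμ
  have hinc : ∀ x y, x ≤ y → ENNReal.ofReal |uMax f y - uMax f x| ≤ μ (Ioc x y) := by
    intro x y hxy
    have i1 : uIcc (uMax f x) (uMax f y) ⊆ uMax f '' Icc x y := by
      have := intermediate_value_uIcc (continuous_uMax hf).continuousOn (a := x) (b := y)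
      rwa [uIcc_of_le hxy] at this
    have i2 : uMax f '' Icc x y ⊆
        uMax f '' (E ∩ D ∩ Ioc x y) ∪ (uMax f '' {x} ∪ uMax f '' (E ∩ D)ᶜ) := by
      rw [← image_union, ← image_union]
      refine image_mono fun z hz => ?_
      by_cases h1 : z ∈ E ∩ D
      · rcases hz.1.eq_or_lt with h2 | h2
        · exact Or.inr (Or.inl h2.symm)
        · exact Or.inl ⟨h1, h2, hz.2⟩
      · exact Or.inr (Or.inr h1)
    have i3 : volume (uMax f '' {x} ∪ uMax f '' (E ∩ D)ᶜ) = 0 :=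
      measure_union_null (by simp) (volume_uMax_image_compl_eq_zero hf h0)
    calc ENNReal.ofReal |uMax f y - uMax f x| = volume (uIcc (uMax f x) (uMax f y)) := by
          rw [Real.volume_interval]
      _ ≤ volume (uMax f '' (E ∩ D ∩ Ioc x y)) + 0 := by
          rw [← i3]
          exact (measure_mono (i1.trans i2)).trans (measure_union_le _ _)
      _ ≤ ∫⁻ x in E ∩ D ∩ Ioc x y, ‖deriv (uMax f) x‖ₑ := by
          rw [add_zero]
          exact volume_image_le_lintegral_enorm_deriv ((hEm.inter hDm).inter measurableSet_Ioc)
            fun z hz => hz.1.2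
      _ ≤ ∫⁻ x in Ioc x y ∩ E, ‖deriv (uMax f) x‖ₑ :=
          lintegral_mono_set fun z hz => ⟨hz.2, hz.1.1⟩
      _ = μ (Ioc x y) := by
          rw [hμ, withDensity_apply _ measurableSet_Ioc, Measure.restrict_restrict measurableSet_Ioc]
  refine eVariationOn_le_of_forall_sum_le fun n p hp _ => ?_
  have hsum : ENNReal.ofReal (∑ i ∈ Finset.range n, |uMax f (p (i + 1)) - uMax f (p i)|) ≤
      μ (Ioc (p 0) (p n)) := by
    induction n with
    | zero => simp
    | succ n ih =>
      rw [Finset.sum_range_succ, ENNReal.ofReal_add (by positivity) (abs_nonneg _),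
        ← Ioc_union_Ioc_eq_Ioc (hp n.zero_le) (hp n.le_succ),
        measure_union (Ioc_disjoint_Ioc_of_le le_rfl) measurableSet_Ioc]
      exact add_le_add ih (hinc _ _ (hp n.le_succ))
  refine hsum.trans ((measure_mono (subset_univ _)).trans (le_of_eq ?_))
  rw [hμ, withDensity_apply _ MeasurableSet.univ, Measure.restrict_univ]

theorem BoundedVariationOn.integrable_deriv_real {u : ℝ → ℝ} (hu : BoundedVariationOn u univ) :
    Integrable (deriv u) :=
  ⟨(measurable_deriv u).aestronglyMeasurable,
    hu.lintegral_enorm_deriv_le.trans_lt (lt_top_iff_ne_top.2 hu)⟩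

theorem BoundedVariationOn.setIntegral_abs_deriv_le {u : ℝ → ℝ} (hu : BoundedVariationOn u univ)
    (s : Set ℝ) : ∫ x in s, |deriv u x| ≤ (eVariationOn u univ).toReal := by
  have := integral_norm_eq_lintegral_enorm (μ := volume.restrict s)
    (measurable_deriv u).aestronglyMeasurable
  simp only [Real.norm_eq_abs] at this
  rw [this]
  exact ENNReal.toReal_mono hu
    ((lintegral_mono' Measure.restrict_le_self le_rfl).trans hu.lintegral_enorm_deriv_le)

theorem toReal_eVariationOn_uMax_le {f : ℝ → ℝ} (hf : BoundedVariationOn f univ)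
    (h0 : ∀ x, |f x| ≤ uMax f x) :
    (eVariationOn (uMax f) univ).toReal ≤
      ∫ x in {x | |f x| < uMax f x}, |deriv (uMax f) x| := by
  have := integral_norm_eq_lintegral_enorm (μ := volume.restrict {x | |f x| < uMax f x})
    (measurable_deriv (uMax f)).aestronglyMeasurable
  simp only [Real.norm_eq_abs] at this
  rw [this]
  exact ENNReal.toReal_mono ((hf.uMax h0).integrable_deriv_real.restrict.2.ne)
    (eVariationOn_uMax_le_lintegral hf h0)

/-- A Scheffé type lemma: pointwise convergence together with convergence of masses gives
convergence in mean. -/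
theorem tendsto_integral_abs_sub_of_integral_le {α : Type*} [MeasurableSpace α] {μ : Measure α}
    {v : ℕ → α → ℝ} {u : α → ℝ} (hv : ∀ j, Integrable (v j) μ) (hu : Integrable u μ)
    (hlim : ∀ᵐ x ∂μ, Tendsto (fun j => v j x) atTop (𝓝 (u x)))
    (hmass : ∀ ε > 0, ∀ᶠ j in atTop, ∫ x, |v j x| ∂μ ≤ (∫ x, |u x| ∂μ) + ε) :
    Tendsto (fun j => ∫ x, |v j x - u x| ∂μ) atTop (𝓝 0) := by
  have hw : Tendsto (fun j => ∫ x, (|v j x| + |u x| - |v j x - u x|) ∂μ) atTop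
      (𝓝 (∫ x, (|u x| + |u x| - |u x - u x|) ∂μ)) := by
    refine tendsto_integral_of_dominated_convergence (fun x => 2 * |u x|)
      (fun j => (((hv j).abs.add hu.abs).sub ((hv j).sub hu).abs).aestronglyMeasurable)
      (hu.abs.const_mul 2) (fun j => ae_of_all _ fun x => ?_) ?_
    · have h1 := abs_sub_abs_le_abs_sub (v j x) (u x)
      have h2 := abs_sub (v j x) (u x)
      rw [Real.norm_eq_abs, abs_le]
      constructor <;> linarith [abs_nonneg (u x)]
    · filter_upwards [hlim] with x hx
      exact (hx.abs.add tendsto_const_nhds).sub (hx.sub tendsto_const_nhds).abs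
  have heq : ∀ j, ∫ x, |v j x - u x| ∂μ = (∫ x, |v j x| ∂μ) + (∫ x, |u x| ∂μ) -
      ∫ x, (|v j x| + |u x| - |v j x - u x|) ∂μ := by
    intro j
    have h1 := integral_sub ((hv j).abs.add hu.abs) ((hv j).sub hu).abs
    have h2 := integral_add (hv j).abs hu.abs
    simp only [Pi.add_apply, Pi.sub_apply] at h1 h2
    rw [h1, h2]
    ring
  have hlim2 : ∫ x, (|u x| + |u x| - |u x - u x|) ∂μ = 2 * ∫ x, |u x| ∂μ := by
    rw [← integral_const_mul]
    exact integral_congr_ae (ae_of_all _ fun x => by simp; ring)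
  rw [hlim2] at hw
  refine tendsto_order.2 ⟨fun a ha => Eventually.of_forall fun j =>
    ha.trans_le (integral_nonneg fun x => abs_nonneg _), fun a ha => ?_⟩
  filter_upwards [hmass (a / 3) (by positivity),
    hw.eventually_const_lt (show 2 * (∫ x, |u x| ∂μ) - a / 3 < _ by linarith)] with j h1 h2
  rw [heq j]
  linarith

/-- Convergence of the derivatives of the maximal functions off the contact set, for functions
dominated everywhere by their maximal function. -/
theorem tendsto_integral_abs_deriv_uMax_sub {f : ℝ → ℝ} (hf : BoundedVariationOn f univ)
    (hf0 : ∀ x, |f x| ≤ uMax f x) {G : ℕ → ℝ → ℝ} (hG : ∀ j, BoundedVariationOn (G j) univ)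
    (hG0 : ∀ j x, |G j x| ≤ uMax (G j) x) {e : ℕ → ℝ} (he : Tendsto e atTop (𝓝 0))
    (hGf : ∀ j t, |G j t - f t| ≤ e j)
    (hvar : ∀ j, eVariationOn (G j - f) univ ≤ ENNReal.ofReal (e j)) :
    Tendsto (fun j => ∫ x in {x | |f x| < uMax f x},
      |deriv (uMax (G j)) x - deriv (uMax f) x|) atTop (𝓝 0) := by
  have hu := hf.uMax hf0
  have hv := fun j => (hG j).uMax (hG0 j)
  refine tendsto_integral_abs_sub_of_integral_le (fun j => (hv j).integrable_deriv_real.restrict)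
    hu.integrable_deriv_real.restrict ?_ fun ε hε => ?_
  · refine (ae_restrict_iff' (measurableSet_abs_lt_uMax hf)).2 ?_
    have hc : ∀ᵐ x, ContinuousAt f x := ae_iff.2 (hf.countable_not_continuousAt_real.measure_zero _)
    filter_upwards [hc, hu.locallyBoundedVariationOn.ae_differentiableAt,
      ae_all_iff.2 fun j => (hv j).locallyBoundedVariationOn.ae_differentiableAt]
      with x h1 h2 h3 hx
    exact tendsto_deriv_uMax hf hG he hGf hx h1 h2 h3
  · obtain ⟨δ, hδ, H⟩ := exists_eVariationOn_uMax_le hf hf0 hε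
    filter_upwards [he.eventually_lt_const hδ] with j hj
    have h1 := H (G j) (hG j) (hG0 j) (fun x => (hGf j x).trans hj.le)
      ((hvar j).trans (ENNReal.ofReal_le_ofReal hj.le))
    linarith [(hv j).setIntegral_abs_deriv_le {x | |f x| < uMax f x},
      toReal_eVariationOn_uMax_le hf hf0]

theorem BoundedVariationOn.rightLim_ae_eq {f : ℝ → ℝ} (hf : BoundedVariationOn f univ) :
    f.rightLim =ᵐ[volume] f := by
  have hc : ∀ᵐ x, ContinuousAt f x := ae_iff.2 (hf.countable_not_continuousAt_real.measure_zero _)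
  filter_upwards [hc] with x hx
  exact hx.continuousWithinAt.rightLim_eq

theorem mAvg_congr_ae {f g : ℝ → ℝ} (h : f =ᵐ[volume] g) : mAvg f = mAvg g := by
  ext a b
  rw [mAvg, mAvg, intervalIntegral.integral_congr_ae (g := fun t => |g t|)]
  filter_upwards [h] with t ht _
  rw [ht]

theorem uMax_congr_ae {f g : ℝ → ℝ} (h : f =ᵐ[volume] g) : uMax f = uMax g := by
  ext x
  rw [uMax, uMax, mAvg_congr_ae h]

theorem BoundedVariationOn.tendsto_rightLim_nhdsGT {f : ℝ → ℝ} (hf : BoundedVariationOn f univ)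
    (x : ℝ) : Tendsto f.rightLim (𝓝[>] x) (𝓝 (f.rightLim x)) :=
  (hf.continuousWithinAt_rightLim (x := x)).mono_left (nhdsWithin_mono _ Ioi_subset_Ici_self)

theorem BoundedVariationOn.abs_rightLim_le_uMax {f : ℝ → ℝ} (hf : BoundedVariationOn f univ)
    (x : ℝ) : |f.rightLim x| ≤ _root_.uMax f.rightLim x :=
  abs_le_uMax_of_tendsto_right hf.rightLim (hf.tendsto_rightLim_nhdsGT x)

theorem BoundedVariationOn.abs_rightLim_le_ubar {f : ℝ → ℝ} (hf : BoundedVariationOn f univ)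
    (x : ℝ) : |f.rightLim x| ≤ ubar f x := by
  obtain ⟨B, -, hB⟩ := hf.exists_abs_le
  have : Nonempty {h : ℝ // 0 < h} := ⟨⟨1, one_pos⟩⟩
  refine le_ciInf fun h => le_of_forall_lt_imp_le_of_dense fun c hc => ?_
  obtain ⟨b, hb, hbh, hcb⟩ := le_uMax_of_tendsto_right hf (hf.tendsto_rightLim (x := x)) h.2 hc
  refine hcb.trans (le_csSup ⟨B, ?_⟩ ⟨x, b, hb, le_rfl, hb.le, hbh, rfl⟩)
  rintro _ ⟨a, b, hab, -, -, -, rfl⟩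
  exact mAvg_le_of_forall_le hf hab fun t _ => hB t

theorem BoundedVariationOn.rightLim_sub_real {f g : ℝ → ℝ} (hf : BoundedVariationOn f univ)
    (hg : BoundedVariationOn g univ) : (f - g).rightLim = f.rightLim - g.rightLim := by
  ext x
  exact tendsto_nhds_unique ((hf.sub_real hg).tendsto_rightLim (x := x))
    ((hf.tendsto_rightLim (x := x)).sub (hg.tendsto_rightLim (x := x)))

theorem BoundedVariationOn.abs_le_bvNorm {f : ℝ → ℝ} (hf : BoundedVariationOn f univ) (x : ℝ) :
    |f x| ≤ bvNorm f := by
  refine ge_of_tendsto ((hf.tendsto_atBot_limUnder.abs).add_const (varOn f univ))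
    (Eventually.of_forall fun y => ?_)
  have h := hf.dist_le (mem_univ x) (mem_univ y)
  rw [Real.dist_eq] at h
  have := abs_sub_abs_le_abs_sub (f x) (f y)
  rw [varOn]
  linarith

theorem BoundedVariationOn.abs_rightLim_le_bvNorm {f : ℝ → ℝ} (hf : BoundedVariationOn f univ)
    (x : ℝ) : |f.rightLim x| ≤ bvNorm f :=
  le_of_tendsto (hf.tendsto_rightLim (x := x)).abs (Eventually.of_forall hf.abs_le_bvNorm)

theorem BoundedVariationOn.eVariationOn_rightLim_le_bvNorm {f : ℝ → ℝ}
    (hf : BoundedVariationOn f univ) :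
    eVariationOn f.rightLim univ ≤ ENNReal.ofReal (bvNorm f) := by
  refine (eVariationOn.eVariationOn_rightLim_le isOpen_univ).trans ?_
  rw [← ENNReal.ofReal_toReal hf]
  exact ENNReal.ofReal_le_ofReal (le_add_of_nonneg_left (abs_nonneg _))

theorem stmt17 (f : ℝ → ℝ) (hf : BVfun f) (fj : ℕ → ℝ → ℝ) (hfj : ∀ j, BVfun (fj j))
    (hconv : Tendsto (fun j => bvNorm (fj j - f)) atTop (𝓝 0)) :
    Tendsto (fun j => ∫ x in {x : ℝ | ubar f x < uMax f x},
        |deriv (uMax (fj j)) x - deriv (uMax f) x|) atTop (𝓝 0) := by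
  have hb : BoundedVariationOn f univ := hf
  have hbj : ∀ j, BoundedVariationOn (fj j) univ := hfj
  have hs : ∀ j, BoundedVariationOn (fj j - f) univ := fun j => (hbj j).sub_real hb
  have huf : uMax f.rightLim = uMax f := uMax_congr_ae hb.rightLim_ae_eq
  have huj : ∀ j, uMax (fj j).rightLim = uMax (fj j) := fun j =>
    uMax_congr_ae (hbj j).rightLim_ae_eq
  have key := tendsto_integral_abs_deriv_uMax_sub hb.rightLim hb.abs_rightLim_le_uMax
    (fun j => (hbj j).rightLim) (fun j => (hbj j).abs_rightLim_le_uMax) hconv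
    (fun j t => by
      have := (hs j).abs_rightLim_le_bvNorm t
      rwa [(hbj j).rightLim_sub_real hb] at this)
    (fun j => (hbj j).rightLim_sub_real hb ▸ (hs j).eVariationOn_rightLim_le_bvNorm)
  simp only [huf, huj] at key
  refine squeeze_zero (fun j => integral_nonneg fun x => abs_nonneg _) (fun j => ?_) key
  have hu : Integrable (deriv (uMax f)) := by
    rw [← huf]
    exact (hb.rightLim.uMax hb.abs_rightLim_le_uMax).integrable_deriv_real
  have hv : Integrable (deriv (uMax (fj j))) := by
    rw [← huj]
    exact ((hbj j).rightLim.uMax (hbj j).abs_rightLim_le_uMax).integrable_deriv_real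
  refine setIntegral_mono_set (hv.sub hu).abs.integrableOn (ae_of_all _ fun x => abs_nonneg _)
    (Eventually.of_forall fun x hx => ?_)
  exact (hb.abs_rightLim_le_ubar x).trans_lt hx
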